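/- arXiv:2206.12743 — 2 statements merged into one kernel-verified Lean document; each statement's English description precedes it below -/
import Mathlib

section
/- Let q > 2 be a prime power, B ≥ 2 a real constant, and ξ : ℕ → ℝ a function with ξ(n) → ∞ as n → ∞. Then N(n,k) ∼ C(q) · q^{n−k} · k^{q−1} · (n−k)^{q−1} uniformly for ξ(n)·log n ≤ k ≤ n/B; precisely, for every ε > 0 there exists N₀ such that for all integers n ≥ N₀ and all integers k with ξ(n)·log n ≤ k ≤ n/B, one has |N(n,k) / (C(q) · q^{n−k} · k^{q−1} · (n−k)^{q−1}) − 1| ≤ ε. -/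
open Polynomial

/-- Number of monic irreducible factors counted with multiplicity. -/
noncomputable def Omega {F : Type*} [Field F] (f : F[X]) : ℕ :=
  (UniqueFactorizationMonoid.factors f).card

/-- `Ncount F n k` = number of monic polynomials of degree `n` over `F` with `Omega f = k`. -/
noncomputable def Ncount (F : Type*) [Field F] (n k : ℕ) : ℕ :=
  Set.ncard {f : F[X] | f.Monic ∧ f.natDegree = n ∧ Omega f = k}

/-- The constant `C(q)`. -/
noncomputable def Cconst (q : ℕ) (F : Type*) [Field F] : ℝ :=
  ((Nat.factorial (q - 1) : ℝ))⁻¹ ^ 2 * (1 - (q : ℝ)⁻¹) ^ (q ^ 2) *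
    ∏' p : {p : F[X] // p.Monic ∧ Irreducible p ∧ 2 ≤ p.natDegree},
      (1 - ((q : ℝ) ^ (p.1.natDegree - 1))⁻¹)⁻¹ * (1 - ((q : ℝ) ^ p.1.natDegree)⁻¹) ^ (q : ℕ)

/-!
Split off the linear factors of a monic polynomial `f` of degree `n` with `k` irreducible factors.
Weighting an irreducible `p` by its excess `deg p - 1`, the nonlinear factors of `f` form a
multiset `s` of total excess `m = n - k`, and the linear factors form an arbitrary multiset of
`k - |s|` elements of a set of size `q`, so `N(n, k)` is the sum over `s` of the multichoose numbers
`(k - |s| + q - 1).choose (q - 1)`.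

The number of multisets `s` of excess `m` has generating function
`∏ d ≥ 1, (1 - X ^ d) ^ (-π (d + 1))`, where `π d` counts the irreducibles of degree `d`. Since
`π (d + 1)` is close to `q * π d`, the quotient by
`(1 - q X) ^ (-q) = ∏ d ≥ 1, (1 - X ^ d) ^ (-q * π d)` converges absolutely at `X = 1 / q`, so the
number of `s` is asymptotic to a constant times `q ^ m * m ^ (q - 1)`. An exponential moment bound
shows that `|s|` is `O(log m)` on average, which is negligible against `k`, so the multichoose
numbers may be replaced by `k ^ (q - 1) / (q - 1)!`.
-/

open Filter Asymptotics Topology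
open scoped PowerSeries

section MultisetsByWeight

variable {ι R : Type*} [CommSemiring R]

/-- The power series `1 / (1 - c X ^ d)`, as an explicit sequence of coefficients so that it makes
sense over a semiring. -/
noncomputable def geomSeries (c : R) (d : ℕ) : R⟦X⟧ :=
  PowerSeries.mk fun i ↦ if d ∣ i then c ^ (i / d) else 0

theorem coeff_geomSeries (c : R) (d i : ℕ) :
    PowerSeries.coeff i (geomSeries c d) = if d ∣ i then c ^ (i / d) else 0 :=
  PowerSeries.coeff_mk _ _

variable {w : ι → ℕ} {S : Finset ι} {T : Finset (Multiset ι)} {m : ℕ}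

theorem mem_of_mem_of_sum_map_eq (hS : ∀ i, w i ≤ m → i ∈ S) {s : Multiset ι}
    (hs : (s.map w).sum = m) {i : ι} (hi : i ∈ s) : i ∈ S :=
  hS i <| hs ▸ Multiset.single_le_sum (fun _ _ ↦ Nat.zero_le _) _ (Multiset.mem_map_of_mem w hi)

theorem smul_toFinsupp_injective [DecidableEq ι] (hw : ∀ i, w i ≠ 0) :
    Function.Injective fun s : Multiset ι ↦ w • s.toFinsupp := by
  intro s t hst
  ext i
  exact Nat.eq_of_mul_eq_mul_left (Nat.pos_of_ne_zero (hw i)) (DFunLike.congr_fun hst i)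

theorem smul_toFinsupp_mem_finsuppAntidiag [DecidableEq ι] (hS : ∀ i, w i ≤ m → i ∈ S)
    {s : Multiset ι} (hs : (s.map w).sum = m) : w • s.toFinsupp ∈ S.finsuppAntidiag m := by
  have hsub : s.toFinset ⊆ S := fun i hi ↦
    mem_of_mem_of_sum_map_eq hS hs (Multiset.mem_toFinset.1 hi)
  refine Finset.mem_finsuppAntidiag.2 ⟨?_, fun i hi ↦ hsub ?_⟩
  · rw [← hs, Finset.sum_multiset_map_count]
    refine (Finset.sum_subset_zero_on_sdiff hsub (fun i hi ↦ ?_) fun i _ ↦ ?_).symm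
    · simp [Multiset.count_eq_zero.2 (mt Multiset.mem_toFinset.2 (Finset.mem_sdiff.1 hi).2)]
    · simp [mul_comm]
  · have : w i * s.count i ≠ 0 := Finsupp.mem_support_iff.1 hi
    exact Multiset.mem_toFinset.2 (Multiset.count_ne_zero.1 (right_ne_zero_of_mul this))

theorem finite_setOf_sum_map_eq (hw : ∀ i, w i ≠ 0) (hfin : {i | w i ≤ m}.Finite) :
    {s : Multiset ι | (s.map w).sum = m}.Finite := by
  classical
  exact Set.Finite.of_injOn
    (fun s hs ↦ smul_toFinsupp_mem_finsuppAntidiag (S := hfin.toFinset) (by simp) hs)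
    (smul_toFinsupp_injective hw).injOn (Finset.finite_toSet _)

theorem exists_smul_toFinsupp_eq [DecidableEq ι] {l : ι →₀ ℕ} (hl : l ∈ S.finsuppAntidiag m)
    (hdvd : ∀ i ∈ S, w i ∣ l i) :
    ∃ s : Multiset ι, (s.map w).sum = m ∧ w • s.toFinsupp = l := by
  obtain ⟨hsum, hsupp⟩ := Finset.mem_finsuppAntidiag.1 hl
  refine ⟨∑ i ∈ S, Multiset.replicate (l i / w i) i, ?_, Finsupp.ext fun i ↦ ?_⟩
  · calc ((∑ i ∈ S, Multiset.replicate (l i / w i) i).map w).sum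
        = ∑ i ∈ S, l i / w i * w i := by
          rw [← Multiset.coe_mapAddMonoidHom, map_sum, ← Multiset.coe_sumAddMonoidHom, map_sum]
          simp
      _ = ∑ i ∈ S, l i := Finset.sum_congr rfl fun i hi ↦ Nat.div_mul_cancel (hdvd i hi)
      _ = m := hsum
  · have hcount : (∑ j ∈ S, Multiset.replicate (l j / w j) j).count i =
        if i ∈ S then l i / w i else 0 := by
      simp [Multiset.count_sum', Multiset.count_replicate]
    change w i * Multiset.count i _ = l i
    split_ifs at hcount with hi
    · rw [hcount, Nat.mul_div_cancel' (hdvd i hi)]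
    · rw [hcount, mul_zero, Finsupp.notMem_support_iff.1 (mt (@hsupp i) hi)]

theorem sum_pow_card_eq_coeff_prod_geomSeries (hw : ∀ i, w i ≠ 0) (hS : ∀ i, w i ≤ m → i ∈ S)
    (hT : ∀ s, s ∈ T ↔ (s.map w).sum = m) (c : R) :
    ∑ s ∈ T, c ^ s.card = PowerSeries.coeff m (∏ i ∈ S, geomSeries c (w i)) := by
  classical
  rw [PowerSeries.coeff_prod]
  refine Finset.sum_of_injOn _ (smul_toFinsupp_injective hw).injOn
    (fun s hs ↦ smul_toFinsupp_mem_finsuppAntidiag hS ((hT s).1 hs)) (fun l hl hnot ↦ ?_)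
    fun s hs ↦ ?_
  · have hdvd : ¬ ∀ i ∈ S, w i ∣ l i := fun h ↦
      have ⟨s, hs, hsl⟩ := exists_smul_toFinsupp_eq hl h
      hnot ⟨s, (hT s).2 hs, hsl⟩
    push Not at hdvd
    obtain ⟨i, hi, hil⟩ := hdvd
    exact Finset.prod_eq_zero hi (by rw [coeff_geomSeries, if_neg hil])
  · have hcoeff (i : ι) :
        PowerSeries.coeff ((w • s.toFinsupp) i) (geomSeries c (w i)) = c ^ s.count i := by
      have hmul : (w • s.toFinsupp) i = w i * s.count i := rfl
      rw [coeff_geomSeries, hmul, if_pos (dvd_mul_right _ _),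
        Nat.mul_div_cancel_left _ (Nat.pos_of_ne_zero (hw i))]
    simp only [hcoeff]
    rw [Finset.prod_pow_eq_pow_sum,
      Multiset.sum_count_eq_card fun i hi ↦ mem_of_mem_of_sum_map_eq hS ((hT s).1 hs) hi]

theorem sum_pow_card_eq_coeff_prod_geomSeries_pow (hw : ∀ i, w i ≠ 0) {D : ℕ} (hD : m ≤ D)
    (hfin : {i | w i ≤ D}.Finite) (hT : ∀ s, s ∈ T ↔ (s.map w).sum = m) (c : R) :
    ∑ s ∈ T, c ^ s.card = PowerSeries.coeff m
      (∏ d ∈ Finset.range D, geomSeries c (d + 1) ^ {i | w i = d + 1}.ncard) := by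
  have hmaps : ∀ i ∈ hfin.toFinset, w i - 1 ∈ Finset.range D := fun i hi ↦ by
    have := hw i
    have : w i ≤ D := hfin.mem_toFinset.1 hi
    rw [Finset.mem_range]
    omega
  rw [sum_pow_card_eq_coeff_prod_geomSeries hw (S := hfin.toFinset)
    (fun i hi ↦ hfin.mem_toFinset.2 (hi.trans hD)) hT c, ← Finset.prod_fiberwise_of_maps_to hmaps]
  congr 1
  refine Finset.prod_congr rfl fun d hd ↦ ?_
  have hfiber (i : ι) : i ∈ hfin.toFinset.filter (w · - 1 = d) ↔ w i = d + 1 := by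
    have := hw i
    have := Finset.mem_range.1 hd
    rw [Finset.mem_filter, hfin.mem_toFinset, Set.mem_ofPred_eq]
    omega
  have hcard : {i | w i = d + 1}.ncard = (hfin.toFinset.filter (w · - 1 = d)).card := by
    rw [← Set.ncard_coe_finset]
    exact congrArg _ (Set.ext fun i ↦ (hfiber i).symm)
  rw [hcard]
  exact Finset.prod_eq_pow_card fun i hi ↦ by rw [(hfiber i).1 hi]

end MultisetsByWeight

section MonicFactorization

variable {F : Type*} [Field F]

/-- The monic irreducible polynomials over `F`. -/
abbrev MonicIrred (F : Type*) [Field F] : Type _ := {p : F[X] // p.Monic ∧ Irreducible p}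

/-- The monic irreducible polynomials of degree at least `2`; this is the index type of the Euler
product in `Cconst`. -/
abbrev NonlinearIrred (F : Type*) [Field F] : Type _ :=
  {p : F[X] // p.Monic ∧ Irreducible p ∧ 2 ≤ p.natDegree}

theorem normalizedFactors_multiset_prod [DecidableEq F] {s : Multiset F[X]}
    (hs : ∀ p ∈ s, p.Monic ∧ Irreducible p) :
    UniqueFactorizationMonoid.normalizedFactors s.prod = s := by
  rw [UniqueFactorizationMonoid.normalizedFactors_prod_eq _ fun p hp ↦ (hs p hp).2]
  exact (Multiset.map_congr rfl fun p hp ↦ (hs p hp).1.normalize_eq_self).trans s.map_id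

theorem multiset_prod_injOn_monic_irreducible :
    Set.InjOn Multiset.prod {s : Multiset F[X] | ∀ p ∈ s, p.Monic ∧ Irreducible p} := by
  classical
  intro s hs t ht hst
  rw [← normalizedFactors_multiset_prod hs, ← normalizedFactors_multiset_prod ht]
  exact congrArg _ hst

theorem exists_multiset_prod_eq_of_monic {f : F[X]} (hf : f.Monic) :
    ∃ s : Multiset F[X], (∀ p ∈ s, p.Monic ∧ Irreducible p) ∧ s.prod = f := by
  classical
  refine ⟨UniqueFactorizationMonoid.normalizedFactors f, fun p hp ↦ ?_, ?_⟩
  · have := (Polynomial.mem_normalizedFactors_iff hf.ne_zero).1 hp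
    exact ⟨this.2.1, this.1⟩
  · rw [UniqueFactorizationMonoid.prod_normalizedFactors_eq hf.ne_zero, hf.normalize_eq_self]

theorem monic_multiset_prod {s : Multiset F[X]} (hs : ∀ p ∈ s, p.Monic ∧ Irreducible p) :
    s.prod.Monic := by
  simpa using monic_multiset_prod_of_monic s id fun p hp ↦ (hs p hp).1

theorem Omega_multiset_prod {s : Multiset F[X]} (hs : ∀ p ∈ s, p.Monic ∧ Irreducible p) :
    Omega s.prod = s.card := by
  classical
  conv_rhs => rw [← normalizedFactors_multiset_prod hs]
  rw [Omega, UniqueFactorizationMonoid.normalizedFactors, Multiset.card_map]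

theorem ncard_setOf_monic_natDegree_eq [Fintype F] (n : ℕ) :
    {f : F[X] | f.Monic ∧ f.natDegree = n}.ncard = Fintype.card F ^ n := by
  rw [← Nat.card_coe_set_eq]
  refine (Nat.card_congr ((monicEquivDegreeLT n).trans (degreeLTEquiv F n).toEquiv)).trans ?_
  simp

theorem finite_setOf_natDegree_le [Finite F] (n : ℕ) : {f : F[X] | f.natDegree ≤ n}.Finite := by
  have : Finite (degreeLT F (n + 1)) := Finite.of_equiv _ (degreeLTEquiv F (n + 1)).toEquiv.symm
  refine (Set.toFinite (degreeLT F (n + 1) : Set F[X])).subset fun f hf ↦ ?_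
  exact mem_degreeLT.2 (degree_le_natDegree.trans_lt (by exact_mod_cast Nat.lt_succ_of_le hf))

end MonicFactorization

section IrreducibleCount

/-- The number of monic irreducible polynomials of degree `d` over `F`. -/
noncomputable def irredCount (F : Type*) [Field F] (d : ℕ) : ℕ :=
  {p : F[X] | p.Monic ∧ Irreducible p ∧ p.natDegree = d}.ncard

variable (F : Type*) [Field F]

theorem ncard_monicIrred_natDegree_eq (d : ℕ) :
    {p : MonicIrred F | p.1.natDegree = d}.ncard = irredCount F d := by
  refine (Set.ncard_subtype _ {p : F[X] | p.natDegree = d}).trans (congrArg _ (Set.ext fun p ↦ ?_))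
  simp only [Set.mem_inter_iff, Set.mem_ofPred_eq]
  tauto

theorem ncard_nonlinearIrred_natDegree_eq {d : ℕ} (hd : 2 ≤ d) :
    {p : NonlinearIrred F | p.1.natDegree = d}.ncard = irredCount F d := by
  refine (Set.ncard_subtype _ {p : F[X] | p.natDegree = d}).trans (congrArg _ (Set.ext fun p ↦ ?_))
  simp only [Set.mem_inter_iff, Set.mem_ofPred_eq]
  exact ⟨fun ⟨h, hm, hi, _⟩ ↦ ⟨hm, hi, h⟩, fun ⟨hm, hi, h⟩ ↦ ⟨h, hm, hi, h ▸ hd⟩⟩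

theorem finite_setOf_monicIrred_natDegree_le [Finite F] (n : ℕ) :
    {p : MonicIrred F | p.1.natDegree ≤ n}.Finite :=
  (finite_setOf_natDegree_le n).preimage Subtype.val_injective.injOn

theorem ncard_setOf_sum_natDegree_monicIrred_eq [Fintype F] (m : ℕ) :
    {s : Multiset (MonicIrred F) | (s.map fun p ↦ p.1.natDegree).sum = m}.ncard =
      Fintype.card F ^ m := by
  have hval (s : Multiset (MonicIrred F)) : ∀ p ∈ s.map Subtype.val, p.Monic ∧ Irreducible p :=
    fun p hp ↦ have ⟨i, _, hi⟩ := Multiset.mem_map.1 hp; hi ▸ i.2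
  have hnatDegree (s : Multiset (MonicIrred F)) :
      (s.map Subtype.val).prod.natDegree = (s.map fun p ↦ p.1.natDegree).sum := by
    rw [natDegree_multiset_prod_of_monic _ fun p hp ↦ (hval s p hp).1, Multiset.map_map]
    rfl
  rw [← ncard_setOf_monic_natDegree_eq]
  refine Set.ncard_congr (fun (s : Multiset (MonicIrred F)) _ ↦ (s.map Subtype.val).prod)
    (fun s hs ↦ ?_) (fun s t _ _ hst ↦ ?_) fun f hf ↦ ?_
  · exact ⟨monic_multiset_prod (hval s), (hnatDegree s).trans hs⟩
  · exact Multiset.map_injective Subtype.val_injective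
      (multiset_prod_injOn_monic_irreducible (hval s) (hval t) hst)
  · obtain ⟨s, hs, rfl⟩ := exists_multiset_prod_eq_of_monic hf.1
    lift s to Multiset (MonicIrred F) using hs
    exact ⟨s, (hnatDegree s).symm.trans hf.2, rfl⟩

theorem coeff_prod_geomSeries_pow_irredCount [Fintype F] {m D : ℕ} (hD : m ≤ D) :
    PowerSeries.coeff m
        (∏ d ∈ Finset.range D, geomSeries (1 : ℝ) (d + 1) ^ irredCount F (d + 1)) =
      (Fintype.card F : ℝ) ^ m := by
  have hdeg (p : MonicIrred F) : p.1.natDegree ≠ 0 := p.2.2.natDegree_pos.ne'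
  have hfin := finite_setOf_sum_map_eq hdeg (finite_setOf_monicIrred_natDegree_le F m)
  have hcount := sum_pow_card_eq_coeff_prod_geomSeries_pow hdeg hD
    (finite_setOf_monicIrred_natDegree_le F D) (fun s ↦ hfin.mem_toFinset) (1 : ℝ)
  simp only [ncard_monicIrred_natDegree_eq, one_pow, Finset.sum_const, nsmul_one] at hcount
  rw [← hcount, ← Set.ncard_eq_toFinset_card _ hfin, ncard_setOf_sum_natDegree_monicIrred_eq,
    Nat.cast_pow]

theorem squarefree_X_pow_card_pow_sub_X [Fintype F] {n : ℕ} (hn : n ≠ 0) :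
    Squarefree (X ^ Fintype.card F ^ n - X : F[X]) := by
  obtain ⟨p, hp⟩ := CharP.exists F
  refine (galois_poly_separable p _ (dvd_pow ?_ hn)).squarefree
  exact (CharP.cast_eq_zero_iff F p _).1 (Nat.cast_card_eq_zero F)

theorem mem_normalizedFactors_X_pow_card_pow_sub_X [Fintype F] [DecidableEq F] {n : ℕ}
    (hn : n ≠ 0) {p : F[X]} :
    p ∈ UniqueFactorizationMonoid.normalizedFactors (X ^ Fintype.card F ^ n - X : F[X]) ↔
      p.Monic ∧ Irreducible p ∧ p.natDegree ∣ n := by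
  rw [Polynomial.mem_normalizedFactors_iff
    (FiniteField.X_pow_card_pow_sub_X_ne_zero F hn Fintype.one_lt_card), and_left_comm]
  refine and_congr_right fun _ ↦ and_congr_right fun hp ↦ ?_
  rw [hp.natDegree_dvd_iff_dvd_X_pow_card_pow_sub_X, Nat.card_eq_fintype_card]

theorem sum_divisors_mul_irredCount [Fintype F] {n : ℕ} (hn : n ≠ 0) :
    ∑ d ∈ n.divisors, d * irredCount F d = Fintype.card F ^ n := by
  classical
  set f : F[X] := X ^ Fintype.card F ^ n - X
  have hf : f ≠ 0 := FiniteField.X_pow_card_pow_sub_X_ne_zero F hn Fintype.one_lt_card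
  set S : Finset F[X] := ⟨UniqueFactorizationMonoid.normalizedFactors f,
    (UniqueFactorizationMonoid.squarefree_iff_nodup_normalizedFactors hf).1
      (squarefree_X_pow_card_pow_sub_X F hn)⟩
  have hS {p : F[X]} : p ∈ S ↔ p.Monic ∧ Irreducible p ∧ p.natDegree ∣ n :=
    mem_normalizedFactors_X_pow_card_pow_sub_X F hn
  have hmaps : ∀ p ∈ S, p.natDegree ∈ n.divisors := fun p hp ↦
    Nat.mem_divisors.2 ⟨(hS.1 hp).2.2, hn⟩
  have hfiber : ∀ d ∈ n.divisors,
      ∑ p ∈ S with p.natDegree = d, p.natDegree = d * irredCount F d := by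
    intro d hd
    rw [Finset.sum_eq_card_nsmul fun p hp ↦ (Finset.mem_filter.1 hp).2, smul_eq_mul, mul_comm,
      irredCount, ← Set.ncard_coe_finset]
    congr 2
    ext p
    simp only [Finset.coe_filter, hS, Set.mem_ofPred_eq]
    exact ⟨fun h ↦ ⟨h.1.1, h.1.2.1, h.2⟩, fun h ↦
      ⟨⟨h.1, h.2.1, h.2.2 ▸ Nat.dvd_of_mem_divisors hd⟩, h.2.2⟩⟩
  calc ∑ d ∈ n.divisors, d * irredCount F d
      = ∑ p ∈ S, p.natDegree := by
        rw [← Finset.sum_fiberwise_of_maps_to hmaps]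
        exact (Finset.sum_congr rfl hfiber).symm
    _ = (UniqueFactorizationMonoid.normalizedFactors f).prod.natDegree :=
        (natDegree_multiset_prod_of_monic _ fun p hp ↦ (hS.1 hp).1).symm
    _ = f.natDegree :=
        natDegree_eq_of_degree_eq
          (degree_eq_degree_of_associated (UniqueFactorizationMonoid.prod_normalizedFactors hf))
    _ = Fintype.card F ^ n :=
        FiniteField.X_pow_card_pow_sub_X_natDegree_eq F hn Fintype.one_lt_card

end IrreducibleCount

section CountingFormula

variable {F : Type*} [Field F]

/-- The weight `deg p - 1` of a nonlinear monic irreducible `p`. A product of `k` monic irreducibles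
has degree `k` plus the total excess of its nonlinear factors. -/
def excess (p : NonlinearIrred F) : ℕ := p.1.natDegree - 1

theorem natDegree_eq_excess_add_one (p : NonlinearIrred F) : p.1.natDegree = excess p + 1 :=
  (Nat.sub_add_cancel (one_le_two.trans p.2.2.2)).symm

theorem excess_ne_zero (p : NonlinearIrred F) : excess p ≠ 0 := by
  have := p.2.2.2
  have := natDegree_eq_excess_add_one p
  omega

theorem finite_setOf_excess_le [Finite F] (n : ℕ) : {p : NonlinearIrred F | excess p ≤ n}.Finite :=
  ((finite_setOf_natDegree_le (n + 1)).preimage Subtype.val_injective.injOn).subset fun p hp ↦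
    (natDegree_eq_excess_add_one p).trans_le (Nat.succ_le_succ hp)

theorem ncard_setOf_excess_eq (d : ℕ) :
    {p : NonlinearIrred F | excess p = d + 1}.ncard = irredCount F (d + 2) := by
  rw [← ncard_nonlinearIrred_natDegree_eq F (Nat.le_add_left 2 d)]
  simp only [natDegree_eq_excess_add_one, Nat.succ_inj]

/-- The multisets of nonlinear monic irreducibles of total excess `m`. -/
noncomputable def excessMultisets (F : Type*) [Field F] [Finite F] (m : ℕ) :
    Finset (Multiset (NonlinearIrred F)) :=
  (finite_setOf_sum_map_eq excess_ne_zero (finite_setOf_excess_le m)).toFinset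

theorem mem_excessMultisets [Finite F] {m : ℕ} {s : Multiset (NonlinearIrred F)} :
    s ∈ excessMultisets F m ↔ (s.map excess).sum = m :=
  Set.Finite.mem_toFinset _

theorem sum_excessMultisets_pow_card [Finite F] {R : Type*} [CommSemiring R] {m D : ℕ} (hD : m ≤ D)
    (c : R) :
    ∑ s ∈ excessMultisets F m, c ^ s.card = PowerSeries.coeff m
      (∏ d ∈ Finset.range D, geomSeries c (d + 1) ^ irredCount F (d + 2)) := by
  simp only [← ncard_setOf_excess_eq]
  exact sum_pow_card_eq_coeff_prod_geomSeries_pow excess_ne_zero hD (finite_setOf_excess_le D)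
    (fun _ ↦ mem_excessMultisets) c

/-- The multiset of monic irreducibles whose linear members are `X - a` for `a ∈ t` and whose
nonlinear members are given by `s`. -/
noncomputable def joinFactors (s : Multiset (NonlinearIrred F)) (t : Multiset F) :
    Multiset F[X] :=
  t.map (fun a ↦ X - C a) + s.map Subtype.val

theorem monic_irreducible_of_mem_joinFactors {s : Multiset (NonlinearIrred F)} {t : Multiset F} :
    ∀ p ∈ joinFactors s t, p.Monic ∧ Irreducible p := by
  intro p hp
  rcases Multiset.mem_add.1 hp with hp | hp
  · obtain ⟨a, -, rfl⟩ := Multiset.mem_map.1 hp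
    exact ⟨monic_X_sub_C a, irreducible_X_sub_C a⟩
  · obtain ⟨i, -, rfl⟩ := Multiset.mem_map.1 hp
    exact ⟨i.2.1, i.2.2.1⟩

theorem card_joinFactors (s : Multiset (NonlinearIrred F)) (t : Multiset F) :
    (joinFactors s t).card = t.card + s.card := by
  simp [joinFactors]

theorem sum_natDegree_joinFactors (s : Multiset (NonlinearIrred F)) (t : Multiset F) :
    ((joinFactors s t).map natDegree).sum = t.card + s.card + (s.map excess).sum := by
  have hs : (s.map fun p ↦ p.1.natDegree).sum = s.card + (s.map excess).sum := by
    simp only [natDegree_eq_excess_add_one, Multiset.sum_map_add, Multiset.map_const',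
      Multiset.sum_replicate, smul_eq_mul, mul_one, add_comm]
  simp [joinFactors, Multiset.map_map, hs, add_assoc]

theorem joinFactors_inj {s s' : Multiset (NonlinearIrred F)} {t t' : Multiset F}
    (h : joinFactors s t = joinFactors s' t') : s = s' ∧ t = t' := by
  have hfilter (s : Multiset (NonlinearIrred F)) (t : Multiset F) :
      (joinFactors s t).filter (2 ≤ ·.natDegree) = s.map Subtype.val := by
    rw [joinFactors, Multiset.filter_add, Multiset.filter_eq_nil.2, Multiset.filter_eq_self.2,
      zero_add]
    · simp only [Multiset.mem_map]
      rintro _ ⟨p, -, rfl⟩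
      exact p.2.2.2
    · simp only [Multiset.mem_map]
      rintro _ ⟨a, -, rfl⟩
      simp
  have hs : s = s' := Multiset.map_injective Subtype.val_injective <| by
    rw [← hfilter s t, h, hfilter]
  refine ⟨hs, Multiset.map_injective (f := fun a : F ↦ X - C a) (fun a b hab ↦ ?_)
    (add_right_cancel (hs ▸ h : _ = joinFactors s t'))⟩
  exact C_injective (sub_right_injective hab)

theorem exists_joinFactors_eq {u : Multiset F[X]} (hu : ∀ p ∈ u, p.Monic ∧ Irreducible p) :
    ∃ s t, joinFactors s t = u := by
  induction u using Multiset.induction_on with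
  | empty => exact ⟨0, 0, rfl⟩
  | cons p u ih =>
    obtain ⟨s, t, rfl⟩ := ih fun p' hp' ↦ hu p' (Multiset.mem_cons_of_mem hp')
    obtain ⟨hmonic, hirred⟩ := hu p (Multiset.mem_cons_self p _)
    by_cases hdeg : 2 ≤ p.natDegree
    · exact ⟨⟨p, hmonic, hirred, hdeg⟩ ::ₘ s, t, by simp [joinFactors]⟩
    · have hp : p = X + C (p.coeff 0) :=
        hmonic.eq_X_add_C (by have := hirred.natDegree_pos; omega)
      exact ⟨s, -p.coeff 0 ::ₘ t, by simp [joinFactors, ← hp]⟩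

theorem natDegree_prod_joinFactors (s : Multiset (NonlinearIrred F)) (t : Multiset F) :
    (joinFactors s t).prod.natDegree = t.card + s.card + (s.map excess).sum := by
  rw [natDegree_multiset_prod_of_monic _ fun p hp ↦ (monic_irreducible_of_mem_joinFactors p hp).1,
    sum_natDegree_joinFactors]

theorem Ncount_add_eq_sum_multichoose [Fintype F] (m k : ℕ) :
    Ncount F (m + k) k = ∑ s ∈ excessMultisets F m with s.card ≤ k,
      (Fintype.card F).multichoose (k - s.card) := by
  classical
  have hsym (j : ℕ) :
      (Fintype.card F).multichoose j = (Finset.univ : Finset (Sym F j)).card := by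
    rw [Finset.card_univ, Sym.card_sym_eq_multichoose]
  simp only [hsym]
  rw [← Finset.card_sigma, Ncount, ← Set.ncard_coe_finset]
  refine (Set.ncard_congr (fun x _ ↦ (joinFactors x.1 x.2.1).prod) ?_ ?_ ?_).symm
  · rintro ⟨s, t⟩ hst
    simp only [Finset.mem_coe, Finset.mem_sigma, Finset.mem_filter, mem_excessMultisets,
      Finset.mem_univ, and_true] at hst
    refine ⟨?_, ?_, ?_⟩
    · exact monic_multiset_prod monic_irreducible_of_mem_joinFactors
    · rw [natDegree_prod_joinFactors, t.2, hst.1, Nat.sub_add_cancel hst.2, add_comm]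
    · rw [Omega_multiset_prod monic_irreducible_of_mem_joinFactors, card_joinFactors, t.2,
        Nat.sub_add_cancel hst.2]
  · rintro ⟨s, t⟩ ⟨s', t'⟩ - - h
    obtain ⟨rfl, ht⟩ := joinFactors_inj (multiset_prod_injOn_monic_irreducible
      monic_irreducible_of_mem_joinFactors monic_irreducible_of_mem_joinFactors h)
    exact congrArg (Sigma.mk s) (Subtype.ext ht)
  · rintro f ⟨hf, hdeg, hΩ⟩
    obtain ⟨u, hu, rfl⟩ := exists_multiset_prod_eq_of_monic hf
    obtain ⟨s, t, rfl⟩ := exists_joinFactors_eq hu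
    rw [Omega_multiset_prod hu, card_joinFactors] at hΩ
    rw [natDegree_prod_joinFactors] at hdeg
    have hexcess : (s.map excess).sum = m := by omega
    have hcard : s.card ≤ k := by omega
    refine ⟨⟨s, ⟨t, by omega⟩⟩, ?_, rfl⟩
    exact Finset.mem_sigma.2 ⟨Finset.mem_filter.2 ⟨mem_excessMultisets.2 hexcess, hcard⟩,
      Finset.mem_univ _⟩

end CountingFormula

section RealPowerSeries

/-- The power series `f` converges (absolutely) to `y` at the real point `x`. -/
def HasSumAt (f : ℝ⟦X⟧) (x y : ℝ) : Prop :=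
  HasSum (fun i ↦ PowerSeries.coeff i f * x ^ i) y

variable {f g : ℝ⟦X⟧} {x y z : ℝ}

theorem hasSumAt_X_pow (d : ℕ) (x : ℝ) : HasSumAt (PowerSeries.X ^ d) x (x ^ d) := by
  have h := hasSum_single (f := fun i ↦ PowerSeries.coeff i (PowerSeries.X ^ d : ℝ⟦X⟧) * x ^ i) d
    fun i hi ↦ by rw [PowerSeries.coeff_X_pow, if_neg hi, zero_mul]
  rwa [PowerSeries.coeff_X_pow_self, one_mul] at h

theorem HasSumAt.sub (hf : HasSumAt f x y) (hg : HasSumAt g x z) :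
    HasSumAt (f - g) x (y - z) := by
  simpa [HasSumAt, sub_mul] using HasSum.sub hf hg

theorem HasSumAt.mul (hf : HasSumAt f x y) (hg : HasSumAt g x z) :
    HasSumAt (f * g) x (y * z) := by
  have hcauchy (n : ℕ) : PowerSeries.coeff n (f * g) * x ^ n =
      ∑ ij ∈ Finset.HasAntidiagonal.antidiagonal n,
        PowerSeries.coeff ij.1 f * x ^ ij.1 * (PowerSeries.coeff ij.2 g * x ^ ij.2) := by
    rw [PowerSeries.coeff_mul, Finset.sum_mul]
    refine Finset.sum_congr rfl fun ij hij ↦ ?_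
    rw [← Finset.HasAntidiagonal.mem_antidiagonal.1 hij]
    ring
  have hf' := hf.summable.norm
  have hg' := hg.summable.norm
  simp only [HasSumAt, hcauchy]
  rw [← hf.tsum_eq, ← hg.tsum_eq, tsum_mul_tsum_eq_tsum_sum_antidiagonal_of_summable_norm hf' hg']
  exact (summable_norm_sum_mul_antidiagonal_of_summable_norm hf' hg').of_norm.hasSum

theorem HasSumAt.pow (hf : HasSumAt f x y) (n : ℕ) : HasSumAt (f ^ n) x (y ^ n) := by
  induction n with
  | zero => simpa using hasSumAt_X_pow 0 x
  | succ n ih => simpa only [pow_succ] using ih.mul hf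

theorem HasSumAt.prod {f : ℕ → ℝ⟦X⟧} {y : ℕ → ℝ} (hf : ∀ d, HasSumAt (f d) x (y d))
    (s : Finset ℕ) : HasSumAt (∏ d ∈ s, f d) x (∏ d ∈ s, y d) := by
  induction s using Finset.cons_induction with
  | empty => simpa using hasSumAt_X_pow 0 x
  | cons d s hd ih => simpa only [Finset.prod_cons] using (hf d).mul ih

theorem hasSumAt_geomSeries {c : ℝ} {d : ℕ} (hd : d ≠ 0) (hc : |c * x ^ d| < 1) :
    HasSumAt (geomSeries c d) x (1 - c * x ^ d)⁻¹ := by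
  have hinj : Function.Injective (d * · : ℕ → ℕ) := mul_right_injective₀ hd
  refine (hinj.hasSum_iff fun i hi ↦ ?_).1 ((hasSum_geometric_of_abs_lt_one hc).congr_fun ?_)
  · rw [coeff_geomSeries, if_neg fun ⟨j, hj⟩ ↦ hi ⟨j, hj.symm⟩, zero_mul]
  · intro j
    simp [coeff_geomSeries, Nat.mul_div_cancel_left _ (Nat.pos_of_ne_zero hd), mul_pow, pow_mul]

end RealPowerSeries

section Majorization

/-- `f` is majorized by `g` if the coefficients of `g` dominate the absolute values of those of
`f`. -/
def MajorizedBy (f g : ℝ⟦X⟧) : Prop :=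
  ∀ i, |PowerSeries.coeff i f| ≤ PowerSeries.coeff i g

variable {f g f' g' : ℝ⟦X⟧}

theorem MajorizedBy.coeff_nonneg (h : MajorizedBy f g) (i : ℕ) : 0 ≤ PowerSeries.coeff i g :=
  (abs_nonneg _).trans (h i)

theorem majorizedBy_self (h : ∀ i, 0 ≤ PowerSeries.coeff i f) : MajorizedBy f f :=
  fun i ↦ (abs_of_nonneg (h i)).le

theorem majorizedBy_one_of_le {f : ℝ⟦X⟧} (h₀ : 1 ≤ PowerSeries.coeff 0 f)
    (h : ∀ i, 0 ≤ PowerSeries.coeff i f) : MajorizedBy 1 f := by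
  intro i
  rw [PowerSeries.coeff_one]
  split_ifs with hi
  · simpa [hi] using h₀
  · simpa using h i

theorem MajorizedBy.mul (h : MajorizedBy f g) (h' : MajorizedBy f' g') :
    MajorizedBy (f * f') (g * g') := by
  intro i
  rw [PowerSeries.coeff_mul, PowerSeries.coeff_mul]
  refine (Finset.abs_sum_le_sum_abs _ _).trans (Finset.sum_le_sum fun ij _ ↦ ?_)
  rw [abs_mul]
  exact mul_le_mul (h _) (h' _) (abs_nonneg _) (h.coeff_nonneg _)

theorem majorizedBy_one_one : MajorizedBy 1 1 :=
  majorizedBy_one_of_le (by simp) fun i ↦ by rw [PowerSeries.coeff_one]; split_ifs <;> simp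

theorem MajorizedBy.pow (h : MajorizedBy f g) (n : ℕ) : MajorizedBy (f ^ n) (g ^ n) := by
  induction n with
  | zero => simpa using majorizedBy_one_one
  | succ n ih => simpa only [pow_succ] using ih.mul h

theorem MajorizedBy.prod {f g : ℕ → ℝ⟦X⟧} (h : ∀ d, MajorizedBy (f d) (g d)) (s : Finset ℕ) :
    MajorizedBy (∏ d ∈ s, f d) (∏ d ∈ s, g d) := by
  induction s using Finset.cons_induction with
  | empty => simpa using majorizedBy_one_one
  | cons d s hd ih => simpa only [Finset.prod_cons] using (h d).mul ih

end Majorization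

section InfiniteProduct

theorem coeff_prod_range_eq {R : Type*} [CommRing R] {E : ℕ → R⟦X⟧}
    (hE : ∀ d, PowerSeries.X ^ (d + 1) ∣ E d - 1) {i D : ℕ} (hD : i ≤ D) :
    PowerSeries.coeff i (∏ d ∈ Finset.range D, E d) =
      PowerSeries.coeff i (∏ d ∈ Finset.range i, E d) := by
  induction D, hD using Nat.le_induction with
  | base => rfl
  | succ D hD ih =>
    have hzero : PowerSeries.coeff i ((∏ d ∈ Finset.range D, E d) * (E D - 1)) = 0 :=
      PowerSeries.X_pow_dvd_iff.1 ((hE D).mul_left _) i (Nat.lt_succ_of_le hD)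
    rw [mul_sub, mul_one, map_sub, sub_eq_zero] at hzero
    rw [Finset.prod_range_succ, hzero, ih]

theorem coeff_prod_range_le {M : ℕ → ℝ⟦X⟧} (hM : ∀ d, PowerSeries.X ^ (d + 1) ∣ M d - 1)
    (hpos : ∀ d i, 0 ≤ PowerSeries.coeff i (M d)) (i D : ℕ) :
    PowerSeries.coeff i (∏ d ∈ Finset.range D, M d) ≤
      PowerSeries.coeff i (∏ d ∈ Finset.range i, M d) := by
  have hone (d : ℕ) : MajorizedBy 1 (M d) := by
    refine majorizedBy_one_of_le ?_ (hpos d)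
    have := PowerSeries.X_pow_dvd_iff.1 (hM d) 0 d.succ_pos
    rw [map_sub, PowerSeries.coeff_one, if_pos rfl, sub_eq_zero] at this
    exact this.ge
  have hmono : Monotone fun D ↦ PowerSeries.coeff i (∏ d ∈ Finset.range D, M d) := by
    refine monotone_nat_of_le_succ fun D ↦ ?_
    have := (MajorizedBy.prod (fun d ↦ majorizedBy_self (hpos d)) (Finset.range D)).mul (hone D) i
    rw [mul_one] at this
    rw [Finset.prod_range_succ]
    exact (le_abs_self _).trans this
  rw [← coeff_prod_range_eq hM (le_max_left i D)]
  exact hmono (le_max_right i D)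

variable {x K V : ℝ} {E M : ℕ → ℝ⟦X⟧} {e μ : ℕ → ℝ}

theorem summable_coeff_prod_range_mul_pow (hx : 0 ≤ x)
    (hM : ∀ d, PowerSeries.X ^ (d + 1) ∣ M d - 1) (hpos : ∀ d i, 0 ≤ PowerSeries.coeff i (M d))
    (hμ : ∀ d, HasSumAt (M d) x (μ d)) (hK : ∀ D, ∏ d ∈ Finset.range D, μ d ≤ K) :
    Summable fun i ↦ PowerSeries.coeff i (∏ d ∈ Finset.range i, M d) * x ^ i := by
  have hprod (D i : ℕ) : 0 ≤ PowerSeries.coeff i (∏ d ∈ Finset.range D, M d) :=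
    (MajorizedBy.prod (fun d ↦ majorizedBy_self (hpos d)) _).coeff_nonneg i
  refine summable_of_sum_range_le (c := K) (fun i ↦ mul_nonneg (hprod i i) (pow_nonneg hx i))
    fun N ↦ ?_
  calc ∑ i ∈ Finset.range N, PowerSeries.coeff i (∏ d ∈ Finset.range i, M d) * x ^ i
      = ∑ i ∈ Finset.range N, PowerSeries.coeff i (∏ d ∈ Finset.range N, M d) * x ^ i :=
        Finset.sum_congr rfl fun i hi ↦ by
          rw [coeff_prod_range_eq hM (Finset.mem_range.1 hi).le]
    _ ≤ ∏ d ∈ Finset.range N, μ d :=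
        sum_le_hasSum _ (fun i _ ↦ mul_nonneg (hprod N i) (pow_nonneg hx i)) (HasSumAt.prod hμ _)
    _ ≤ K := hK N

theorem hasSum_coeff_prod_range_mul_pow (hx : 0 ≤ x)
    (hE : ∀ d, PowerSeries.X ^ (d + 1) ∣ E d - 1) (hM : ∀ d, PowerSeries.X ^ (d + 1) ∣ M d - 1)
    (hEM : ∀ d, MajorizedBy (E d) (M d)) (he : ∀ d, HasSumAt (E d) x (e d))
    (hμ : ∀ d, HasSumAt (M d) x (μ d)) (hK : ∀ D, ∏ d ∈ Finset.range D, μ d ≤ K)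
    (hV : Tendsto (fun D ↦ ∏ d ∈ Finset.range D, e d) atTop (𝓝 V)) :
    HasSum (fun i ↦ PowerSeries.coeff i (∏ d ∈ Finset.range i, E d) * x ^ i) V := by
  have hpos (d i : ℕ) := (hEM d).coeff_nonneg i
  have hsummable := summable_coeff_prod_range_mul_pow hx hM hpos hμ hK
  have hbound (D i : ℕ) : ‖PowerSeries.coeff i (∏ d ∈ Finset.range D, E d) * x ^ i‖ ≤
      PowerSeries.coeff i (∏ d ∈ Finset.range i, M d) * x ^ i := by
    rw [norm_mul, norm_pow, Real.norm_of_nonneg hx]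
    exact mul_le_mul_of_nonneg_right
      ((MajorizedBy.prod hEM _ i).trans (coeff_prod_range_le hM hpos i D)) (pow_nonneg hx i)
  have hlim : Tendsto (fun D ↦ ∑' i, PowerSeries.coeff i (∏ d ∈ Finset.range D, E d) * x ^ i) atTop
      (𝓝 (∑' i, PowerSeries.coeff i (∏ d ∈ Finset.range i, E d) * x ^ i)) :=
    tendsto_tsum_of_dominated_convergence hsummable
      (fun i ↦ tendsto_const_nhds.congr' <| (eventually_ge_atTop i).mono fun D hD ↦
        congrArg (· * x ^ i) (coeff_prod_range_eq hE hD).symm)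
      (Eventually.of_forall fun D i ↦ hbound D i)
  have htsum (D : ℕ) : ∑' i, PowerSeries.coeff i (∏ d ∈ Finset.range D, E d) * x ^ i =
      ∏ d ∈ Finset.range D, e d := (HasSumAt.prod he (Finset.range D)).tsum_eq
  simp only [htsum] at hlim
  rw [tendsto_nhds_unique hV hlim]
  exact (hsummable.of_norm_bounded fun i ↦ hbound i i).hasSum

end InfiniteProduct

section OneSubXPow

theorem one_sub_X_pow_mul_geomSeries {R : Type*} [CommRing R] {d : ℕ} (hd : d ≠ 0) :
    (1 - PowerSeries.X ^ d) * geomSeries (1 : R) d = 1 := by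
  ext i
  rw [sub_mul, one_mul, map_sub, PowerSeries.coeff_X_pow_mul', PowerSeries.coeff_one]
  simp only [coeff_geomSeries, one_pow]
  rcases lt_or_ge i d with hi | hi
  · rcases eq_or_ne i 0 with rfl | hi₀
    · simp [hd]
    · simp [hi₀, hi.not_ge, Nat.not_dvd_of_pos_of_lt (Nat.pos_of_ne_zero hi₀) hi]
  · have : i ≠ 0 := fun h ↦ hd (Nat.eq_zero_of_le_zero (h ▸ hi))
    simp [hi, this, Nat.dvd_sub_iff_left hi dvd_rfl]

theorem dvd_zpow_sub_one {R : Type*} [CommRing R] {a : R} {u : Rˣ} (h : a ∣ u - 1) (e : ℤ) :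
    a ∣ ((u ^ e : Rˣ) : R) - 1 := by
  have hquot (v : Rˣ) : a ∣ v - 1 ↔
      Units.map (Ideal.Quotient.mk (Ideal.span {a}) : R →* R ⧸ Ideal.span {a}) v = 1 := by
    rw [← Ideal.mem_span_singleton, ← Ideal.Quotient.eq_zero_iff_mem, map_sub, sub_eq_zero, map_one,
      Units.ext_iff]
    rfl
  rw [hquot, map_zpow, (hquot u).1 h, one_zpow]

/-- The unit `1 - X ^ (d + 1)` of the ring of real power series. Making it a unit gives sense to
its powers with a negative exponent. -/
noncomputable def oneSubXPow (d : ℕ) : ℝ⟦X⟧ˣ where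
  val := 1 - PowerSeries.X ^ (d + 1)
  inv := geomSeries 1 (d + 1)
  val_inv := one_sub_X_pow_mul_geomSeries d.succ_ne_zero
  inv_val := (mul_comm _ _).trans (one_sub_X_pow_mul_geomSeries d.succ_ne_zero)

theorem coe_oneSubXPow_pow (d n : ℕ) :
    ((oneSubXPow d ^ n : ℝ⟦X⟧ˣ) : ℝ⟦X⟧) = (1 - PowerSeries.X ^ (d + 1)) ^ n :=
  Units.val_pow_eq_pow_val _ _

theorem coe_oneSubXPow_zpow_neg (d n : ℕ) :
    ((oneSubXPow d ^ (-n : ℤ) : ℝ⟦X⟧ˣ) : ℝ⟦X⟧) = geomSeries 1 (d + 1) ^ n := by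
  rw [zpow_neg, zpow_natCast, ← inv_pow]
  exact Units.val_pow_eq_pow_val _ _

theorem X_pow_dvd_oneSubXPow_zpow_sub_one (d : ℕ) (e : ℤ) :
    PowerSeries.X ^ (d + 1) ∣ ((oneSubXPow d ^ e : ℝ⟦X⟧ˣ) : ℝ⟦X⟧) - 1 :=
  dvd_zpow_sub_one ⟨-1, by simp [oneSubXPow]⟩ e

theorem hasSumAt_oneSubXPow_zpow {x : ℝ} (hx : |x| < 1) (d : ℕ) (e : ℤ) :
    HasSumAt (oneSubXPow d ^ e : ℝ⟦X⟧ˣ) x ((1 - x ^ (d + 1)) ^ e) := by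
  obtain ⟨n, rfl | rfl⟩ := e.eq_nat_or_neg
  · simp only [zpow_natCast, coe_oneSubXPow_pow]
    simpa using ((hasSumAt_X_pow 0 x).sub (hasSumAt_X_pow (d + 1) x)).pow n
  · have hlt : |1 * x ^ (d + 1)| < 1 := by
      rw [one_mul, abs_pow]
      exact pow_lt_one₀ (abs_nonneg x) hx d.succ_ne_zero
    rw [coe_oneSubXPow_zpow_neg, zpow_neg, zpow_natCast, ← inv_pow]
    simpa using (hasSumAt_geomSeries d.succ_ne_zero hlt).pow n

theorem coeff_geomSeries_nonneg {c : ℝ} (hc : 0 ≤ c) (d i : ℕ) :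
    0 ≤ PowerSeries.coeff i (geomSeries c d) := by
  rw [coeff_geomSeries]
  split_ifs <;> positivity

theorem majorizedBy_one_sub_X_pow (d : ℕ) :
    MajorizedBy (1 - PowerSeries.X ^ (d + 1)) (geomSeries 1 (d + 1)) := by
  intro i
  rw [map_sub, PowerSeries.coeff_one, PowerSeries.coeff_X_pow]
  rcases eq_or_ne i 0 with rfl | hi₀
  · simp [coeff_geomSeries]
  · rcases eq_or_ne i (d + 1) with rfl | hi
    · simp [coeff_geomSeries]
    · simpa [hi₀, hi] using coeff_geomSeries_nonneg zero_le_one (d + 1) i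

theorem majorizedBy_oneSubXPow_zpow (d : ℕ) (e : ℤ) :
    MajorizedBy (oneSubXPow d ^ e : ℝ⟦X⟧ˣ) (geomSeries 1 (d + 1) ^ e.natAbs) := by
  obtain ⟨n, rfl | rfl⟩ := e.eq_nat_or_neg
  · rw [zpow_natCast, coe_oneSubXPow_pow, Int.natAbs_natCast]
    exact (majorizedBy_one_sub_X_pow d).pow n
  · rw [coe_oneSubXPow_zpow_neg, Int.natAbs_neg, Int.natAbs_natCast]
    exact (majorizedBy_self (coeff_geomSeries_nonneg zero_le_one _)).pow n

end OneSubXPow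

section ExcessMultisetCount

variable (F : Type*) [Field F] [Fintype F]

/-- The exponent of the factor `1 - X ^ (d + 1)` that remains when the generating function of the
nonlinear irreducibles is divided by the `q`-th power of the Euler product of `1 / (1 - q X)`. -/
noncomputable def comparisonExponent (d : ℕ) : ℤ :=
  Fintype.card F * irredCount F (d + 1) - irredCount F (d + 2)

/-- The local factor `(1 - X ^ (d + 1)) ^ (q π(d + 1) - π(d + 2))` of the comparison between the
two Euler products. -/
noncomputable def comparisonFactor (d : ℕ) : ℝ⟦X⟧ :=
  (oneSubXPow d ^ comparisonExponent F d : ℝ⟦X⟧ˣ)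

theorem X_pow_dvd_comparisonFactor_sub_one (d : ℕ) :
    PowerSeries.X ^ (d + 1) ∣ comparisonFactor F d - 1 :=
  X_pow_dvd_oneSubXPow_zpow_sub_one d _

theorem geomSeries_pow_irredCount_eq (d : ℕ) :
    geomSeries (1 : ℝ) (d + 1) ^ irredCount F (d + 2) =
      comparisonFactor F d * (geomSeries 1 (d + 1) ^ irredCount F (d + 1)) ^ Fintype.card F := by
  rw [← pow_mul, ← coe_oneSubXPow_zpow_neg, ← coe_oneSubXPow_zpow_neg, comparisonFactor,
    ← Units.val_mul, ← zpow_add, comparisonExponent]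
  congr 2
  push_cast
  ring

theorem coeff_mk_pow_pow {R : Type*} [CommRing R] (a : R) (r j : ℕ) :
    PowerSeries.coeff j ((PowerSeries.mk fun i ↦ a ^ i) ^ (r + 1)) = (r + j).choose r * a ^ j := by
  have hrescale : (PowerSeries.mk fun i ↦ a ^ i) = PowerSeries.rescale a (PowerSeries.mk 1) := by
    ext i
    simp
  rw [hrescale, ← map_pow, PowerSeries.mk_one_pow_eq_mk_choose_add, PowerSeries.coeff_rescale,
    PowerSeries.coeff_mk, mul_comm]

theorem card_excessMultisets_eq_sum {r : ℕ} (hr : Fintype.card F = r + 1) (m : ℕ) :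
    ((excessMultisets F m).card : ℝ) = ∑ ij ∈ Finset.HasAntidiagonal.antidiagonal m,
      PowerSeries.coeff ij.1 (∏ d ∈ Finset.range ij.1, comparisonFactor F d) *
        ((r + ij.2).choose r * (Fintype.card F : ℝ) ^ ij.2) := by
  set G : ℝ⟦X⟧ := ∏ d ∈ Finset.range m, geomSeries 1 (d + 1) ^ irredCount F (d + 1)
  set Q : ℝ⟦X⟧ := PowerSeries.mk fun i ↦ (Fintype.card F : ℝ) ^ i
  set H : ℝ⟦X⟧ := ∏ d ∈ Finset.range m, comparisonFactor F d
  have hprod : ∏ d ∈ Finset.range m, geomSeries (1 : ℝ) (d + 1) ^ irredCount F (d + 2) =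
      H * G ^ (r + 1) := by
    rw [← hr, ← Finset.prod_pow, ← Finset.prod_mul_distrib]
    exact Finset.prod_congr rfl fun d _ ↦ geomSeries_pow_irredCount_eq F d
  have hGQ : PowerSeries.X ^ (m + 1) ∣ G - Q := PowerSeries.X_pow_dvd_iff.2 fun i hi ↦ by
    rw [map_sub, PowerSeries.coeff_mk, sub_eq_zero]
    exact coeff_prod_geomSeries_pow_irredCount F (Nat.le_of_lt_succ hi)
  have hHGQ : PowerSeries.coeff m (H * G ^ (r + 1)) = PowerSeries.coeff m (H * Q ^ (r + 1)) := by
    rw [← sub_eq_zero, ← map_sub, ← mul_sub]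
    exact PowerSeries.X_pow_dvd_iff.1
      ((hGQ.trans (sub_dvd_pow_sub_pow G Q (r + 1))).mul_left H) m m.lt_succ_self
  have hcard := sum_excessMultisets_pow_card (F := F) le_rfl (1 : ℝ) (m := m)
  simp only [one_pow, Finset.sum_const, nsmul_one] at hcard
  rw [hcard, hprod, hHGQ, PowerSeries.coeff_mul]
  refine Finset.sum_congr rfl fun ij hij ↦ ?_
  rw [coeff_mk_pow_pow, coeff_prod_range_eq (X_pow_dvd_comparisonFactor_sub_one F)
    (Finset.HasAntidiagonal.mem_antidiagonal.1 hij ▸ Nat.le_add_right ij.1 ij.2)]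

end ExcessMultisetCount

section IrreducibleDensity

variable (F : Type*) [Field F] [Fintype F]

/-- The proportion `π(n) / q ^ n` of irreducible polynomials among the monic polynomials of degree
`n`. -/
noncomputable def irredDensity (n : ℕ) : ℝ :=
  irredCount F n / (Fintype.card F : ℝ) ^ n

theorem irredDensity_nonneg (n : ℕ) : 0 ≤ irredDensity F n := by
  unfold irredDensity
  positivity

theorem mul_irredCount_le (n : ℕ) : n * irredCount F n ≤ Fintype.card F ^ n := by
  rcases eq_or_ne n 0 with rfl | hn
  · simp
  · rw [← sum_divisors_mul_irredCount F hn]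
    exact Finset.single_le_sum (f := fun d ↦ d * irredCount F d) (fun d _ ↦ Nat.zero_le _)
      (Nat.mem_divisors_self n hn)

theorem card_pow_le_mul_irredCount_add {n : ℕ} (hn : n ≠ 0) :
    Fintype.card F ^ n ≤ n * irredCount F n + Fintype.card F ^ (n / 2 + 1) := by
  have hproper : ∑ d ∈ n.properDivisors, d * irredCount F d ≤ Fintype.card F ^ (n / 2 + 1) := by
    refine (Finset.sum_le_sum fun d _ ↦ mul_irredCount_le F d).trans
      (Nat.geomSum_lt Fintype.one_lt_card fun d hd ↦ ?_).le
    obtain ⟨⟨c, rfl⟩, hlt⟩ := Nat.mem_properDivisors.1 hd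
    have hc : 2 ≤ c := by
      by_contra! hc
      interval_cases c <;> omega
    exact Nat.lt_succ_of_le <| (Nat.le_div_iff_mul_le two_pos).2 (Nat.mul_le_mul_left d hc)
  rw [← sum_divisors_mul_irredCount F hn, ← Nat.insert_self_properDivisors hn,
    Finset.sum_insert Nat.self_notMem_properDivisors]
  exact Nat.add_le_add_left hproper _

theorem mul_irredDensity_le (n : ℕ) : n * irredDensity F n ≤ 1 := by
  rw [irredDensity, ← mul_div_assoc]
  exact div_le_one_of_le₀ (by exact_mod_cast mul_irredCount_le F n) (by positivity)

theorem one_sub_le_mul_irredDensity {n : ℕ} (hn : n ≠ 0) :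
    1 - Fintype.card F * √(Fintype.card F : ℝ)⁻¹ ^ n ≤ n * irredDensity F n := by
  set q := (Fintype.card F : ℝ)
  have hq : 1 < q := Nat.one_lt_cast.2 Fintype.one_lt_card
  have hsqrt : √q⁻¹ ≤ 1 := Real.sqrt_le_one.2 (inv_le_one_of_one_le₀ hq.le)
  have hhalf : q ^ (n / 2 + 1) / q ^ n ≤ q * √q⁻¹ ^ n := by
    calc q ^ (n / 2 + 1) / q ^ n = q * √q⁻¹ ^ (2 * (n - n / 2)) := by
          rw [pow_mul, Real.sq_sqrt (by positivity), inv_pow, pow_sub₀ q (by positivity) (by omega)]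
          field_simp
          ring
      _ ≤ q * √q⁻¹ ^ n := by
          gcongr ?_ * ?_
          exact pow_le_pow_of_le_one (Real.sqrt_nonneg _) hsqrt (by omega)
  have hcount : q ^ n ≤ n * irredCount F n + q ^ (n / 2 + 1) := by
    simpa [q] using Nat.cast_le (α := ℝ).2 (card_pow_le_mul_irredCount_add F hn)
  rw [← div_le_div_iff_of_pos_right (c := q ^ n) (by positivity), div_self (by positivity),
    add_div, mul_div_assoc] at hcount
  rw [irredDensity]
  linarith

theorem abs_irredDensity_sub_inv_le {n : ℕ} (hn : n ≠ 0) :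
    |irredDensity F n - (n : ℝ)⁻¹| ≤ Fintype.card F * √(Fintype.card F : ℝ)⁻¹ ^ n := by
  have hn' : (1 : ℝ) ≤ n := by exact_mod_cast Nat.one_le_iff_ne_zero.2 hn
  have habs : |n * irredDensity F n - 1| ≤ Fintype.card F * √(Fintype.card F : ℝ)⁻¹ ^ n := by
    rw [abs_of_nonpos (sub_nonpos.2 (mul_irredDensity_le F n))]
    linarith [one_sub_le_mul_irredDensity F hn]
  rw [show irredDensity F n - (n : ℝ)⁻¹ = (n * irredDensity F n - 1) / n by field_simp, abs_div,
    Nat.abs_cast]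
  exact (div_le_self (abs_nonneg _) hn').trans habs

theorem comparisonExponent_mul_pow_eq (d : ℕ) :
    comparisonExponent F d * (Fintype.card F : ℝ)⁻¹ ^ (d + 1) =
      Fintype.card F * (irredDensity F (d + 1) - irredDensity F (d + 2)) := by
  simp only [comparisonExponent, irredDensity, inv_pow]
  push_cast
  field_simp
  ring

theorem summable_abs_comparisonExponent_mul_pow :
    Summable fun d ↦ |(comparisonExponent F d : ℝ)| * (Fintype.card F : ℝ)⁻¹ ^ (d + 1) := by
  set q := (Fintype.card F : ℝ)
  have hq : 1 < q := Nat.one_lt_cast.2 Fintype.one_lt_card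
  have hgeom : Summable fun n : ℕ ↦ q * √q⁻¹ ^ n :=
    (summable_geometric_of_lt_one (Real.sqrt_nonneg _)
      ((Real.sqrt_lt' one_pos).2 (by simpa using inv_lt_one_of_one_lt₀ hq))).mul_left q
  have hinv : Summable fun n : ℕ ↦ ((n : ℝ) ^ 2)⁻¹ := Real.summable_nat_pow_inv.2 one_lt_two
  refine (((summable_nat_add_iff 1).2 hinv).add (((summable_nat_add_iff 1).2 hgeom).add
    ((summable_nat_add_iff 2).2 hgeom))).mul_left q |>.of_nonneg_of_le
      (fun d ↦ by positivity) fun d ↦ ?_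
  have htele : |((d + 1 : ℕ) : ℝ)⁻¹ - ((d + 2 : ℕ) : ℝ)⁻¹| ≤ (((d + 1 : ℕ) : ℝ) ^ 2)⁻¹ := by
    rw [inv_sub_inv (by positivity) (by positivity), ← one_div, abs_of_nonneg (by
      push_cast; ring_nf; positivity)]
    gcongr <;> push_cast <;> nlinarith
  have h₁ := abs_irredDensity_sub_inv_le F (n := d + 1) d.succ_ne_zero
  have h₂ := abs_irredDensity_sub_inv_le F (n := d + 2) (d + 1).succ_ne_zero
  rw [abs_sub_comm] at h₂
  have htri := abs_add_three (irredDensity F (d + 1) - ((d + 1 : ℕ) : ℝ)⁻¹)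
    (((d + 1 : ℕ) : ℝ)⁻¹ - ((d + 2 : ℕ) : ℝ)⁻¹) (((d + 2 : ℕ) : ℝ)⁻¹ - irredDensity F (d + 2))
  rw [sub_add_sub_cancel, sub_add_sub_cancel] at htri
  rw [← abs_of_pos (show 0 < q⁻¹ ^ (d + 1) by positivity), ← abs_mul,
    comparisonExponent_mul_pow_eq, abs_mul, Nat.abs_cast]
  gcongr
  linarith

end IrreducibleDensity

section ComparisonSeries

theorem inv_one_sub_le_exp {z C : ℝ} (hz₀ : 0 ≤ z) (hz₁ : z < 1) (hC : 1 ≤ C * (1 - z)) :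
    (1 - z)⁻¹ ≤ Real.exp (C * z) := by
  have h : (1 - z)⁻¹ ≤ C * z + 1 := by
    rw [inv_le_iff_one_le_mul₀ (sub_pos.2 hz₁)]
    nlinarith
  exact h.trans (Real.add_one_le_exp _)

theorem prod_inv_one_sub_pow_le_exp {s : Finset ℕ} {z : ℕ → ℝ} {C : ℝ} (hz₀ : ∀ d ∈ s, 0 ≤ z d)
    (hz₁ : ∀ d ∈ s, z d < 1) (hC : ∀ d ∈ s, 1 ≤ C * (1 - z d)) (n : ℕ → ℕ) :
    ∏ d ∈ s, (1 - z d)⁻¹ ^ n d ≤ Real.exp (C * ∑ d ∈ s, n d * z d) := by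
  rw [Finset.mul_sum, Real.exp_sum]
  refine Finset.prod_le_prod
    (fun d hd ↦ pow_nonneg (inv_nonneg.2 (sub_nonneg.2 (hz₁ d hd).le)) _) fun d hd ↦ ?_
  rw [mul_left_comm, Real.exp_nat_mul]
  exact pow_le_pow_left₀ (inv_nonneg.2 (sub_nonneg.2 (hz₁ d hd).le))
    (inv_one_sub_le_exp (hz₀ d hd) (hz₁ d hd) (hC d hd)) _

variable (F : Type*) [Field F] [Fintype F]

theorem inv_card_pos : 0 < (Fintype.card F : ℝ)⁻¹ :=
  inv_pos.2 (Nat.cast_pos.2 Fintype.card_pos)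

theorem inv_card_le_half : (Fintype.card F : ℝ)⁻¹ ≤ 1 / 2 := by
  rw [one_div]
  exact inv_anti₀ two_pos (Nat.ofNat_le_cast.2 Fintype.one_lt_card)

theorem inv_card_pow_le_half {n : ℕ} (hn : n ≠ 0) : (Fintype.card F : ℝ)⁻¹ ^ n ≤ 1 / 2 := by
  have hx := inv_card_le_half F
  exact (pow_le_of_le_one (inv_card_pos F).le (by linarith) hn).trans hx

theorem hasSum_coeff_prod_comparisonFactor {V : ℝ}
    (hV : Tendsto (fun D ↦ ∏ d ∈ Finset.range D,
      (1 - (Fintype.card F : ℝ)⁻¹ ^ (d + 1)) ^ comparisonExponent F d) atTop (𝓝 V)) :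
    HasSum (fun i ↦ PowerSeries.coeff i (∏ d ∈ Finset.range i, comparisonFactor F d) *
      (Fintype.card F : ℝ)⁻¹ ^ i) V := by
  set x := (Fintype.card F : ℝ)⁻¹
  have hx₀ : 0 ≤ x := (inv_card_pos F).le
  have hhalf (d : ℕ) : x ^ (d + 1) ≤ 1 / 2 := inv_card_pow_le_half F d.succ_ne_zero
  have hx₁ : |x| < 1 := by
    rw [abs_of_nonneg hx₀]
    linarith [inv_card_le_half F]
  have hbound (D : ℕ) : ∏ d ∈ Finset.range D, (1 - x ^ (d + 1))⁻¹ ^ (comparisonExponent F d).natAbs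
      ≤ Real.exp (2 * ∑' d, |(comparisonExponent F d : ℝ)| * x ^ (d + 1)) := by
    refine (prod_inv_one_sub_pow_le_exp (C := 2) (fun d _ ↦ by positivity)
      (fun d _ ↦ by linarith [hhalf d]) (fun d _ ↦ by linarith [hhalf d]) _).trans ?_
    simp only [Nat.cast_natAbs, Int.cast_abs]
    gcongr
    exact (summable_abs_comparisonExponent_mul_pow F).sum_le_tsum _ fun d _ ↦ by positivity
  refine hasSum_coeff_prod_range_mul_pow hx₀ (X_pow_dvd_comparisonFactor_sub_one F) (fun d ↦ ?_)
    (fun d ↦ majorizedBy_oneSubXPow_zpow d _) (fun d ↦ hasSumAt_oneSubXPow_zpow hx₁ d _)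
    (fun d ↦ ?_) hbound hV
  · rw [← coe_oneSubXPow_zpow_neg]
    exact X_pow_dvd_oneSubXPow_zpow_sub_one d _
  · rw [← coe_oneSubXPow_zpow_neg, inv_pow, ← zpow_natCast, ← zpow_neg]
    exact hasSumAt_oneSubXPow_zpow hx₁ d _

end ComparisonSeries

section FiberwiseProducts

variable {ι : Type*} {w : ι → ℕ}

theorem hasProd_pow_ncard_fiber {M : Type*} [CommMonoid M] [TopologicalSpace M] [ContinuousMul M]
    [RegularSpace M] (hw : ∀ d, {i | w i = d}.Finite) {f : ℕ → M} {a : M}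
    (hf : HasProd (fun i ↦ f (w i)) a) : HasProd (fun d ↦ f d ^ {i | w i = d}.ncard) a := by
  refine HasProd.sigma ((Equiv.sigmaFiberEquiv w).hasProd_iff.2 hf) fun d ↦ ?_
  have : Fintype {i // w i = d} := (hw d).fintype
  have hprod : ∏ i : {i // w i = d}, f (w i.1) = f d ^ {i | w i = d}.ncard := by
    rw [Finset.prod_congr rfl fun i _ ↦ congrArg f i.2, Finset.prod_const, Finset.card_univ,
      ← Nat.card_eq_fintype_card]
    rfl
  exact hprod ▸ hasProd_fintype _

theorem summable_comp_of_summable_ncard_fiber_mul (hw : ∀ d, {i | w i = d}.Finite) {f : ℕ → ℝ}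
    (hf₀ : ∀ d, 0 ≤ f d) (hf : Summable fun d ↦ {i | w i = d}.ncard * f d) :
    Summable fun i ↦ f (w i) := by
  have (d : ℕ) : Fintype {i // w i = d} := (hw d).fintype
  have hsum (d : ℕ) : ∑' i : {i // w i = d}, f (w i.1) = {i | w i = d}.ncard * f d := by
    rw [tsum_fintype, Finset.sum_congr rfl fun i _ ↦ congrArg f i.2, Finset.sum_const,
      Finset.card_univ, ← Nat.card_eq_fintype_card, nsmul_eq_mul]
    rfl
  exact (Equiv.sigmaFiberEquiv w).summable_iff.1 <| (summable_sigma_of_nonneg fun i ↦ hf₀ _).2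
    ⟨fun d ↦ (hasSum_fintype _).summable, hf.congr fun d ↦ (hsum d).symm⟩

end FiberwiseProducts

section EulerProduct

theorem one_le_inv_one_sub_mul_mul_one_sub_pow {n : ℕ} {y : ℝ} (hy : y ≤ 1) (hny : n * y < 1) :
    1 ≤ (1 - n * y)⁻¹ * (1 - y) ^ n := by
  have hbernoulli := one_add_mul_le_pow (show -2 ≤ -y by linarith) n
  rw [mul_neg, ← sub_eq_add_neg, ← sub_eq_add_neg] at hbernoulli
  rw [inv_mul_eq_div, one_le_div (sub_pos.2 hny)]
  exact hbernoulli

theorem inv_one_sub_mul_mul_one_sub_pow_le {n : ℕ} {y : ℝ} (hy₀ : 0 ≤ y) (hy₁ : y ≤ 1)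
    (hny : n * y ≤ 1 / 2) : (1 - n * y)⁻¹ * (1 - y) ^ n ≤ 1 + 2 * (n * y) ^ 2 := by
  set z := n * y
  have hz : 0 ≤ z := by positivity
  have hprod : (1 - y) ^ n * (1 + z) ≤ 1 := by
    calc (1 - y) ^ n * (1 + z) ≤ (1 - y) ^ n * (1 + y) ^ n :=
          mul_le_mul_of_nonneg_left (one_add_mul_le_pow (by linarith) n)
            (pow_nonneg (sub_nonneg.2 hy₁) n)
      _ = (1 - y ^ 2) ^ n := by rw [← mul_pow]; ring
      _ ≤ 1 := pow_le_one₀ (by nlinarith) (by nlinarith)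
  rw [inv_mul_eq_div, div_le_iff₀ (by linarith)]
  refine le_of_mul_le_mul_right (hprod.trans ?_) (show 0 < 1 + z by linarith)
  nlinarith [mul_nonneg (sq_nonneg z) (show 0 ≤ 1 - 2 * z ^ 2 by nlinarith)]

/-- The factor `(1 - q ^ (-d))⁻¹ (1 - q ^ (-d - 1)) ^ q` that a nonlinear irreducible of excess
`d` contributes to the Euler product in `Cconst`. -/
noncomputable def eulerFactor (q d : ℕ) : ℝ :=
  (1 - (q : ℝ)⁻¹ ^ d)⁻¹ * (1 - (q : ℝ)⁻¹ ^ (d + 1)) ^ q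

variable (F : Type*) [Field F]

theorem finite_setOf_excess_eq [Finite F] (d : ℕ) : {p : NonlinearIrred F | excess p = d}.Finite :=
  (finite_setOf_excess_le d).subset fun _ ↦ le_of_eq

variable [Fintype F]

theorem eulerFactor_bounds {d : ℕ} (hd : d ≠ 0) :
    1 ≤ eulerFactor (Fintype.card F) d ∧
      eulerFactor (Fintype.card F) d ≤ 1 + 2 * ((Fintype.card F : ℝ)⁻¹ ^ 2) ^ d := by
  have hq : (Fintype.card F : ℝ) ≠ 0 := Nat.cast_ne_zero.2 Fintype.card_ne_zero
  set x := (Fintype.card F : ℝ)⁻¹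
  have hmul : Fintype.card F * x ^ (d + 1) = x ^ d := by
    rw [pow_succ', mul_inv_cancel_left₀ hq]
  have hhalf : x ^ d ≤ 1 / 2 := inv_card_pow_le_half F hd
  have hhalf' : x ^ (d + 1) ≤ 1 / 2 := inv_card_pow_le_half F d.succ_ne_zero
  rw [eulerFactor, ← hmul, ← pow_mul, mul_comm 2 d, pow_mul, ← hmul]
  exact ⟨one_le_inv_one_sub_mul_mul_one_sub_pow (by linarith) (by linarith),
    inv_one_sub_mul_mul_one_sub_pow_le (by positivity) (by linarith) (by linarith)⟩

theorem ncard_setOf_excess_eq_le (d : ℕ) :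
    {p : NonlinearIrred F | excess p = d}.ncard ≤ Fintype.card F ^ (d + 1) := by
  cases d with
  | zero => simp [excess_ne_zero]
  | succ d =>
    rw [ncard_setOf_excess_eq]
    exact (Nat.le_mul_of_pos_left _ (by omega)).trans (mul_irredCount_le F (d + 2))

theorem summable_inv_card_sq_pow_excess :
    Summable fun p : NonlinearIrred F ↦ ((Fintype.card F : ℝ)⁻¹ ^ 2) ^ excess p := by
  refine summable_comp_of_summable_ncard_fiber_mul (f := fun d ↦ ((Fintype.card F : ℝ)⁻¹ ^ 2) ^ d)
    (finite_setOf_excess_eq F) (fun d ↦ by positivity) ?_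
  have hgeom : Summable fun d : ℕ ↦ (Fintype.card F : ℝ)⁻¹ ^ d :=
    summable_geometric_of_lt_one (inv_card_pos F).le (by linarith [inv_card_le_half F])
  refine (hgeom.mul_left (Fintype.card F : ℝ)).of_nonneg_of_le (fun d ↦ by positivity) fun d ↦ ?_
  calc ({p : NonlinearIrred F | excess p = d}.ncard : ℝ) * ((Fintype.card F : ℝ)⁻¹ ^ 2) ^ d
      ≤ (Fintype.card F : ℝ) ^ (d + 1) * ((Fintype.card F : ℝ)⁻¹ ^ 2) ^ d := by
        gcongr
        exact_mod_cast ncard_setOf_excess_eq_le F d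
    _ = Fintype.card F * (Fintype.card F : ℝ)⁻¹ ^ d := by
        simp only [inv_pow]
        field_simp
        ring

theorem multipliable_eulerFactor_excess :
    Multipliable fun p : NonlinearIrred F ↦ eulerFactor (Fintype.card F) (excess p) := by
  have hsummable : Summable fun p : NonlinearIrred F ↦
      eulerFactor (Fintype.card F) (excess p) - 1 := by
    refine ((summable_inv_card_sq_pow_excess F).mul_left 2).of_nonneg_of_le (fun p ↦ ?_) fun p ↦ ?_
    · exact sub_nonneg.2 (eulerFactor_bounds F (excess_ne_zero p)).1
    · exact sub_le_iff_le_add'.2 (eulerFactor_bounds F (excess_ne_zero p)).2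
  simpa only [add_sub_cancel] using Real.multipliable_one_add_of_summable hsummable

theorem tendsto_prod_range_eulerFactor_pow_irredCount :
    Tendsto (fun D ↦ ∏ d ∈ Finset.range D,
        eulerFactor (Fintype.card F) (d + 1) ^ irredCount F (d + 2)) atTop
      (𝓝 (∏' p : NonlinearIrred F, eulerFactor (Fintype.card F) (excess p))) := by
  have hfiber := hasProd_pow_ncard_fiber (finite_setOf_excess_eq F)
    (multipliable_eulerFactor_excess F).hasProd
  refine (hfiber.tendsto_prod_nat.comp (tendsto_add_atTop_nat 1)).congr fun D ↦ ?_
  simp [Finset.prod_range_succ', excess_ne_zero, ncard_setOf_excess_eq]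

theorem irredCount_one : irredCount F 1 = Fintype.card F := by
  simpa using sum_divisors_mul_irredCount F one_ne_zero

/-- The value at `1 / q` of the quotient of the two Euler products, so that
`Cconst q F = comparisonValue F / ((q - 1)!) ^ 2`. -/
noncomputable def comparisonValue : ℝ :=
  (1 - (Fintype.card F : ℝ)⁻¹) ^ Fintype.card F ^ 2 *
    ∏' p : NonlinearIrred F, eulerFactor (Fintype.card F) (excess p)

theorem comparisonValue_pos : 0 < comparisonValue F := by
  have hprod : 1 ≤ ∏' p : NonlinearIrred F, eulerFactor (Fintype.card F) (excess p) :=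
    ge_of_tendsto' (multipliable_eulerFactor_excess F).hasProd fun s ↦
      Finset.prod_induction _ (1 ≤ ·) (fun _ _ ↦ one_le_mul_of_one_le_of_one_le) le_rfl
        fun p _ ↦ (eulerFactor_bounds F (excess_ne_zero p)).1
  have hx := inv_card_le_half F
  exact mul_pos (pow_pos (by linarith) _) (one_pos.trans_le hprod)

theorem Cconst_eq_comparisonValue {r : ℕ} (hr : Fintype.card F = r + 1) :
    Cconst (Fintype.card F) F = ((r.factorial : ℝ)⁻¹) ^ 2 * comparisonValue F := by
  rw [Cconst, comparisonValue, mul_assoc, hr, Nat.add_sub_cancel]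
  congr! 5 with p
  rw [eulerFactor, inv_pow, inv_pow, ← natDegree_eq_excess_add_one]
  rfl

theorem tendsto_irredDensity : Tendsto (irredDensity F) atTop (𝓝 0) := by
  refine squeeze_zero' (Eventually.of_forall (irredDensity_nonneg F)) ?_
    (tendsto_inv_atTop_nhds_zero_nat (𝕜 := ℝ))
  filter_upwards [eventually_gt_atTop 0] with n hn
  rw [← one_div, le_div_iff₀' (Nat.cast_pos.2 hn)]
  exact mul_irredDensity_le F n

theorem tendsto_one_sub_inv_card_pow_pow :
    Tendsto (fun n ↦ (1 - (Fintype.card F : ℝ)⁻¹ ^ n) ^ (Fintype.card F * irredCount F n)) atTop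
      (𝓝 1) := by
  have hlower : Tendsto (fun n ↦ 1 - Fintype.card F * irredDensity F n) atTop (𝓝 1) := by
    simpa using ((tendsto_irredDensity F).const_mul (Fintype.card F : ℝ)).const_sub 1
  have hx₀ (n : ℕ) : 0 ≤ (Fintype.card F : ℝ)⁻¹ ^ n := by positivity
  have hx₁ (n : ℕ) : (Fintype.card F : ℝ)⁻¹ ^ n ≤ 1 :=
    pow_le_one₀ (inv_card_pos F).le (by linarith [inv_card_le_half F])
  refine tendsto_of_tendsto_of_tendsto_of_le_of_le hlower tendsto_const_nhds (fun n ↦ ?_)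
    fun n ↦ pow_le_one₀ (sub_nonneg.2 (hx₁ n)) (sub_le_self _ (hx₀ n))
  refine le_trans (le_of_eq ?_) (one_add_mul_sub_le_pow (n := Fintype.card F * irredCount F n)
    (a := 1 - (Fintype.card F : ℝ)⁻¹ ^ n) (by linarith [hx₁ n]))
  rw [irredDensity, inv_pow]
  push_cast
  ring

theorem prod_range_comparison_eq (D : ℕ) :
    ∏ d ∈ Finset.range D, (1 - (Fintype.card F : ℝ)⁻¹ ^ (d + 1)) ^ comparisonExponent F d =
      (1 - (Fintype.card F : ℝ)⁻¹) ^ Fintype.card F ^ 2 *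
        (∏ d ∈ Finset.range D, eulerFactor (Fintype.card F) (d + 1) ^ irredCount F (d + 2)) /
        (1 - (Fintype.card F : ℝ)⁻¹ ^ (D + 1)) ^ (Fintype.card F * irredCount F (D + 1)) := by
  have hne (d : ℕ) : 1 - (Fintype.card F : ℝ)⁻¹ ^ (d + 1) ≠ 0 := by
    have := inv_card_pow_le_half F (n := d + 1) d.succ_ne_zero
    exact (sub_pos.2 (by linarith)).ne'
  induction D with
  | zero =>
    have := hne 0
    simp_all [irredCount_one, sq]
  | succ D ih =>
    have hD := hne D
    have hD' := hne (D + 1)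
    rw [Finset.prod_range_succ, Finset.prod_range_succ, ih, comparisonExponent, eulerFactor,
      zpow_sub₀ hD, mul_pow, ← pow_mul, ← Nat.cast_mul, zpow_natCast, zpow_natCast]
    generalize (1 - (Fintype.card F : ℝ)⁻¹ ^ (D + 1)) = a at hD
    generalize (1 - (Fintype.card F : ℝ)⁻¹ ^ (D + 1 + 1)) = b at hD'
    rw [inv_pow a]
    field_simp

theorem tendsto_prod_range_comparison :
    Tendsto (fun D ↦ ∏ d ∈ Finset.range D,
      (1 - (Fintype.card F : ℝ)⁻¹ ^ (d + 1)) ^ comparisonExponent F d) atTop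
      (𝓝 (comparisonValue F)) := by
  have hlim := ((tendsto_prod_range_eulerFactor_pow_irredCount F).const_mul
    ((1 - (Fintype.card F : ℝ)⁻¹) ^ Fintype.card F ^ 2)).div
      ((tendsto_one_sub_inv_card_pow_pow F).comp (tendsto_add_atTop_nat 1)) one_ne_zero
  rw [div_one] at hlim
  exact hlim.congr fun D ↦ (prod_range_comparison_eq F D).symm

end EulerProduct

section Convolution

theorem tendsto_sum_antidiagonal_mul {a : ℕ → ℝ} {c : ℕ → ℕ → ℝ} {K L : ℝ} (ha : Summable a)
    (hc : ∀ i, Tendsto (c i) atTop (𝓝 L)) (hK : ∀ i j, |c i j| ≤ K) :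
    Tendsto (fun m ↦ ∑ ij ∈ Finset.HasAntidiagonal.antidiagonal m, a ij.1 * c ij.1 ij.2) atTop
      (𝓝 ((∑' i, a i) * L)) := by
  rw [← tsum_mul_right]
  refine (tendsto_tsum_of_dominated_convergence (𝓕 := atTop) (bound := fun i ↦ ‖a i‖ * K)
    (f := fun m i ↦ if i ≤ m then a i * c i (m - i) else 0) (ha.norm.mul_right K)
    (fun i ↦ ?_) (Eventually.of_forall fun m i ↦ ?_)).congr fun m ↦ ?_
  · refine (((hc i).comp (tendsto_sub_atTop_nat i)).const_mul (a i)).congr' ?_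
    filter_upwards [eventually_ge_atTop i] with m hm
    rw [if_pos hm, Function.comp_apply]
  · split_ifs
    · rw [norm_mul]
      exact mul_le_mul_of_nonneg_left (hK i _) (norm_nonneg _)
    · rw [norm_zero]
      exact mul_nonneg (norm_nonneg _) ((abs_nonneg _).trans (hK 0 0))
  · rw [tsum_eq_sum (s := Finset.range (m + 1)) fun i hi ↦ if_neg fun h ↦
      hi (Finset.mem_range_succ_iff.2 h), Finset.Nat.sum_antidiagonal_eq_sum_range_succ_mk]
    exact Finset.sum_congr rfl fun i hi ↦ if_pos (Finset.mem_range_succ_iff.1 hi)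

theorem isEquivalent_natCast_const_add (a : ℕ) :
    (fun n : ℕ ↦ ((a + n : ℕ) : ℝ)) ~[atTop] fun n ↦ (n : ℝ) := by
  simp only [Nat.cast_add]
  exact IsEquivalent.refl.const_add_of_norm_tendsto_atTop
    (tendsto_norm_atTop_atTop.comp tendsto_natCast_atTop_atTop)

theorem isEquivalent_add_choose (r : ℕ) :
    (fun n : ℕ ↦ ((r + n).choose r : ℝ)) ~[atTop] fun n ↦ (n : ℝ) ^ r / r.factorial :=
  have hadd : Tendsto (r + ·) atTop atTop := tendsto_atTop_mono (fun n ↦ n.le_add_left r) tendsto_id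
  ((isEquivalent_choose r).comp_tendsto hadd).trans
    (((isEquivalent_natCast_const_add r).pow r).div IsEquivalent.refl)

theorem tendsto_add_choose_div_pow (r i : ℕ) :
    Tendsto (fun j : ℕ ↦ ((r + j).choose r : ℝ) / ((i + j : ℕ) : ℝ) ^ r) atTop
      (𝓝 (r.factorial : ℝ)⁻¹) := by
  have hequiv := (isEquivalent_add_choose r).div ((isEquivalent_natCast_const_add i).pow r)
  refine (hequiv.congr_right ?_).tendsto_const
  filter_upwards [eventually_ne_atTop 0] with j hj
  have hj' : (j : ℝ) ≠ 0 := Nat.cast_ne_zero.2 hj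
  rw [Pi.div_apply, Pi.pow_apply, div_right_comm, div_self (pow_ne_zero r hj'), one_div]
  rfl

theorem add_choose_div_pow_le (r i j : ℕ) :
    ((r + j).choose r : ℝ) / ((i + j : ℕ) : ℝ) ^ r ≤ (1 + r) ^ r := by
  rcases (i + j).eq_zero_or_pos with hij | hij
  · obtain rfl : j = 0 := by omega
    rcases eq_or_ne r 0 with rfl | hr
    · simp
    · simpa [hij, hr] using pow_nonneg (by positivity : (0 : ℝ) ≤ 1 + r) r
  · have hle : r + j ≤ (1 + r) * (i + j) := by nlinarith
    rw [div_le_iff₀ (by positivity), ← mul_pow]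
    exact_mod_cast ((r + j).choose_le_pow r).trans (Nat.pow_le_pow_left hle r)

theorem card_excessMultisets_isEquivalent (F : Type*) [Field F] [Fintype F] {r : ℕ}
    (hr : Fintype.card F = r + 1) :
    (fun m ↦ ((excessMultisets F m).card : ℝ)) ~[atTop]
      fun m ↦ comparisonValue F / r.factorial * ((Fintype.card F : ℝ) ^ m * (m : ℝ) ^ r) := by
  have hV := hasSum_coeff_prod_comparisonFactor F (tendsto_prod_range_comparison F)
  have hlim := tendsto_sum_antidiagonal_mul hV.summable (tendsto_add_choose_div_pow r)
    fun i j ↦ (abs_of_nonneg (by positivity)).trans_le (add_choose_div_pow_le r i j)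
  rw [hV.tsum_eq, ← div_eq_mul_inv] at hlim
  have hne : comparisonValue F / r.factorial ≠ 0 :=
    (div_pos (comparisonValue_pos F) (by positivity)).ne'
  refine (((isEquivalent_const_iff_tendsto hne).2 hlim).mul
    (IsEquivalent.refl (u := fun m : ℕ ↦ (Fintype.card F : ℝ) ^ m * (m : ℝ) ^ r))).congr_left ?_
  filter_upwards [eventually_ne_atTop 0] with m hm
  have hm' : (m : ℝ) ^ r ≠ 0 := pow_ne_zero r (Nat.cast_ne_zero.2 hm)
  rw [card_excessMultisets_eq_sum F hr, Pi.mul_apply, Finset.sum_mul]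
  refine Finset.sum_congr rfl fun ij hij ↦ ?_
  obtain rfl := Finset.HasAntidiagonal.mem_antidiagonal.1 hij
  rw [inv_pow, pow_add]
  field_simp

end Convolution

section ExponentialMoment

theorem coeff_prod_geomSeries_pow_mul_pow_le {c x : ℝ} (hc : 0 ≤ c) (hx₀ : 0 ≤ x) (hx₁ : x ≤ 1)
    (hcx : c * x < 1) (n : ℕ → ℕ) (m D : ℕ) :
    PowerSeries.coeff m (∏ d ∈ Finset.range D, geomSeries c (d + 1) ^ n d) * x ^ m ≤
      Real.exp ((1 - c * x)⁻¹ * ∑ d ∈ Finset.range D, n d * (c * x ^ (d + 1))) := by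
  have hz₀ (d : ℕ) : 0 ≤ c * x ^ (d + 1) := by positivity
  have hz (d : ℕ) : c * x ^ (d + 1) ≤ c * x :=
    mul_le_mul_of_nonneg_left (pow_le_of_le_one hx₀ hx₁ d.succ_ne_zero) hc
  have hsum := HasSumAt.prod (fun d ↦ (hasSumAt_geomSeries d.succ_ne_zero
    (by rw [abs_of_nonneg (hz₀ d)]; exact (hz d).trans_lt hcx)).pow (n d)) (Finset.range D)
  have hnonneg (i : ℕ) :
      0 ≤ PowerSeries.coeff i (∏ d ∈ Finset.range D, geomSeries c (d + 1) ^ n d) :=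
    (MajorizedBy.prod (fun d ↦ (majorizedBy_self (coeff_geomSeries_nonneg hc (d + 1))).pow (n d))
      (Finset.range D)).coeff_nonneg i
  calc _ ≤ ∏ d ∈ Finset.range D, (1 - c * x ^ (d + 1))⁻¹ ^ n d :=
        le_hasSum hsum m fun i _ ↦ mul_nonneg (hnonneg i) (pow_nonneg hx₀ i)
    _ ≤ _ := prod_inv_one_sub_pow_le_exp (fun d _ ↦ hz₀ d) (fun d _ ↦ (hz d).trans_lt hcx)
        (fun d _ ↦ by
          rw [inv_mul_eq_div, one_le_div (sub_pos.2 hcx)]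
          exact sub_le_sub_left (hz d) 1) n

variable (F : Type*) [Field F] [Fintype F]

theorem sum_irredDensity_le_log (m : ℕ) :
    ∑ d ∈ Finset.range m, irredDensity F (d + 2) ≤ Real.log (m + 1) := by
  have hle (d : ℕ) : irredDensity F (d + 2) ≤ ((d + 1 + 1 : ℕ) : ℝ)⁻¹ := by
    rw [← one_div, le_div_iff₀' (by positivity)]
    exact mul_irredDensity_le F (d + 2)
  have hharmonic := harmonic_le_one_add_log (m + 1)
  rw [harmonic, Finset.sum_range_succ'] at hharmonic
  push_cast at hharmonic hle
  refine (Finset.sum_le_sum fun d _ ↦ hle d).trans ?_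
  norm_num at hharmonic ⊢
  linarith

theorem sum_excessMultisets_pow_card_le {c : ℝ} (hc₀ : 0 ≤ c) (hc : c < Fintype.card F) (m : ℕ) :
    ∑ s ∈ excessMultisets F m, c ^ s.card ≤
      Real.exp (c * Fintype.card F / (1 - c / Fintype.card F) * Real.log (m + 1)) *
        (Fintype.card F : ℝ) ^ m := by
  have hq : (0 : ℝ) < Fintype.card F := Nat.cast_pos.2 Fintype.card_pos
  have hcoeff := coeff_prod_geomSeries_pow_mul_pow_le hc₀ (inv_card_pos F).le
    ((inv_card_le_half F).trans (by norm_num)) ((div_lt_one hq).2 hc)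
    (fun d ↦ irredCount F (d + 2)) m m
  have hdensity : ∑ d ∈ Finset.range m,
      (irredCount F (d + 2) : ℝ) * (c * (Fintype.card F : ℝ)⁻¹ ^ (d + 1)) =
        c * Fintype.card F * ∑ d ∈ Finset.range m, irredDensity F (d + 2) := by
    rw [Finset.mul_sum]
    refine Finset.sum_congr rfl fun d _ ↦ ?_
    rw [irredDensity, inv_pow]
    field_simp
    ring
  rw [hdensity, ← sum_excessMultisets_pow_card le_rfl, inv_pow, ← div_eq_mul_inv,
    div_le_iff₀ (by positivity), ← div_eq_mul_inv] at hcoeff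
  have hfactor : 0 < 1 - c / Fintype.card F := sub_pos.2 ((div_lt_one hq).2 hc)
  refine hcoeff.trans (mul_le_mul_of_nonneg_right (Real.exp_le_exp.2 ?_) (by positivity))
  rw [← mul_assoc, inv_mul_eq_div]
  exact mul_le_mul_of_nonneg_left (sum_irredDensity_le_log F m) (by positivity)

end ExponentialMoment

section MeanCardinality

theorem log_mul_sum_le {ι : Type*} (T : Finset ι) (f : ι → ℕ) {c : ℝ} (hc : 0 < c) (L : ℝ) :
    Real.log c * ∑ i ∈ T, (f i : ℝ) ≤ L * T.card + Real.exp (-L) * ∑ i ∈ T, c ^ f i := by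
  have hle (n : ℕ) : Real.log c * n ≤ L + Real.exp (-L) * c ^ n := by
    have hexp : Real.exp (Real.log c * n - L) = Real.exp (-L) * c ^ n := by
      rw [sub_eq_neg_add, Real.exp_add, mul_comm (Real.log c), Real.exp_nat_mul, Real.exp_log hc]
    linarith [Real.add_one_le_exp (Real.log c * n - L)]
  calc Real.log c * ∑ i ∈ T, (f i : ℝ) ≤ ∑ i ∈ T, (L + Real.exp (-L) * c ^ f i) := by
        rw [Finset.mul_sum]
        exact Finset.sum_le_sum fun i _ ↦ hle (f i)
    _ = L * T.card + Real.exp (-L) * ∑ i ∈ T, c ^ f i := by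
        rw [Finset.sum_add_distrib, ← Finset.mul_sum, Finset.sum_const, nsmul_eq_mul,
          mul_comm L]

theorem log_natCast_add_one_isBigO :
    (fun m : ℕ ↦ Real.log (m + 1)) =O[atTop] fun m : ℕ ↦ Real.log m := by
  refine IsBigO.of_bound 2 ?_
  filter_upwards [eventually_ge_atTop 2] with m hm
  have hm' : (2 : ℝ) ≤ m := by exact_mod_cast hm
  rw [Real.norm_of_nonneg (Real.log_nonneg (by linarith)),
    Real.norm_of_nonneg (Real.log_nonneg (by linarith))]
  calc Real.log (m + 1) ≤ Real.log ((m : ℝ) ^ 2) := Real.log_le_log (by positivity) (by nlinarith)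
    _ = 2 * Real.log m := by rw [Real.log_pow, Nat.cast_ofNat]

variable (F : Type*) [Field F]

theorem card_pow_isBigO_card_excessMultisets [Fintype F] :
    (fun m ↦ (Fintype.card F : ℝ) ^ m) =O[atTop] fun m ↦ ((excessMultisets F m).card : ℝ) := by
  obtain ⟨r, hr⟩ := Nat.exists_eq_add_one_of_ne_zero (Fintype.card_ne_zero (α := F))
  have hone : (fun _ : ℕ ↦ (1 : ℝ)) =O[atTop] fun m : ℕ ↦ (m : ℝ) ^ r :=
    (IsBigO.pow (isLittleO_one_left_iff ℝ |>.2 <|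
      tendsto_norm_atTop_atTop.comp tendsto_natCast_atTop_atTop).isBigO r).congr_left (by simp)
  have hmain := ((isBigO_refl (fun m ↦ (Fintype.card F : ℝ) ^ m) atTop).mul hone).const_mul_right
    (div_pos (comparisonValue_pos F) (Nat.cast_pos.2 r.factorial_pos)).ne'
  simp only [mul_one] at hmain
  exact hmain.trans (card_excessMultisets_isEquivalent F hr).isBigO_symm

theorem sum_card_excessMultisets_isBigO [Finite F] :
    (fun m ↦ ∑ s ∈ excessMultisets F m, (s.card : ℝ)) =O[atTop]
      fun m ↦ Real.log m * (excessMultisets F m).card := by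
  have := Fintype.ofFinite F
  have hlt : (3 / 2 : ℝ) < Fintype.card F :=
    (by norm_num : (3 / 2 : ℝ) < 2).trans_le (by exact_mod_cast Fintype.one_lt_card (α := F))
  set K : ℝ := 3 / 2 * Fintype.card F / (1 - 3 / 2 / Fintype.card F)
  have hbound (m : ℕ) : Real.log (3 / 2) * ∑ s ∈ excessMultisets F m, (s.card : ℝ) ≤
      K * Real.log (m + 1) * (excessMultisets F m).card + (Fintype.card F : ℝ) ^ m := by
    refine (log_mul_sum_le _ _ (by norm_num) (K * Real.log (m + 1))).trans ?_
    gcongr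
    rw [Real.exp_neg, inv_mul_le_iff₀ (Real.exp_pos _)]
    exact sum_excessMultisets_pow_card_le F (by norm_num) hlt m
  have hlog : 0 < Real.log (3 / 2) := Real.log_pos (by norm_num)
  have hlogm : (fun _ : ℕ ↦ (1 : ℝ)) =O[atTop] fun m : ℕ ↦ Real.log m :=
    (isLittleO_one_left_iff ℝ |>.2 <| tendsto_norm_atTop_atTop.comp <|
      Real.tendsto_log_atTop.comp tendsto_natCast_atTop_atTop).isBigO
  have hterm₁ := (log_natCast_add_one_isBigO.const_mul_left K).mul
    (isBigO_refl (fun m ↦ ((excessMultisets F m).card : ℝ)) atTop)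
  have hterm₂ := hlogm.mul (card_pow_isBigO_card_excessMultisets F)
  simp only [one_mul] at hterm₂
  refine IsBigO.trans (IsBigO.of_bound (Real.log (3 / 2))⁻¹ ?_) (hterm₁.add hterm₂)
  refine Eventually.of_forall fun m ↦ ?_
  rw [Real.norm_of_nonneg (by positivity), inv_mul_eq_div, le_div_iff₀' hlog]
  exact (hbound m).trans (le_abs_self _)

end MeanCardinality

section Asymptotics

theorem succ_multichoose_eq_choose (r j : ℕ) : (r + 1).multichoose j = (r + j).choose r := by
  rw [Nat.multichoose_eq, Nat.add_right_comm, Nat.add_sub_cancel, Nat.choose_symm_add]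

theorem pow_div_factorial_mul_le_add_choose {r j k : ℕ} (hk : k ≠ 0) (hjk : j ≤ k) :
    (k : ℝ) ^ r / r.factorial * (1 - r * (j / k)) ≤ (r + (k - j)).choose r := by
  have hk' : (0 : ℝ) < k := Nat.cast_pos.2 (Nat.pos_of_ne_zero hk)
  have hbernoulli : 1 + r * (-(j / k : ℝ)) ≤ (1 + -(j / k : ℝ)) ^ r := by
    refine one_add_mul_le_pow ?_ r
    have : (j / k : ℝ) ≤ 1 := (div_le_one hk').2 (by exact_mod_cast hjk)
    linarith
  calc (k : ℝ) ^ r / r.factorial * (1 - r * (j / k))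
      ≤ (k : ℝ) ^ r / r.factorial * (1 + -(j / k : ℝ)) ^ r := by
        gcongr
        linarith
    _ = ((k - j : ℕ) : ℝ) ^ r / r.factorial := by
        rw [Nat.cast_sub hjk, div_mul_eq_mul_div, ← mul_pow]
        field_simp
        ring
    _ ≤ ((r + (k - j) + 1 - r : ℕ) : ℝ) ^ r / r.factorial :=
        div_le_div_of_nonneg_right (pow_le_pow_left₀ (Nat.cast_nonneg _)
          (Nat.cast_le.2 (by omega)) r) (Nat.cast_nonneg _)
    _ ≤ (r + (k - j)).choose r := Nat.pow_le_choose r (r + (k - j))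

variable {F : Type*} [Field F] [Fintype F] {r : ℕ}

theorem Ncount_add_le (hr : Fintype.card F = r + 1) (m k : ℕ) :
    Ncount F (m + k) k ≤ (r + k).choose r * (excessMultisets F m).card := by
  rw [Ncount_add_eq_sum_multichoose, hr, mul_comm]
  refine (Finset.sum_le_card_nsmul _ _ ((r + k).choose r) fun s _ ↦ ?_).trans
    (Nat.mul_le_mul_right _ (Finset.card_filter_le _ _))
  rw [succ_multichoose_eq_choose]
  exact Nat.choose_le_choose r (by omega)

theorem le_Ncount_add (hr : Fintype.card F = r + 1) (m : ℕ) {k : ℕ} (hk : k ≠ 0) :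
    (k : ℝ) ^ r / r.factorial *
      ((excessMultisets F m).card - r * (∑ s ∈ excessMultisets F m, (s.card : ℝ)) / k) ≤
        Ncount F (m + k) k := by
  have hr₁ : (1 : ℝ) ≤ r := by
    have := Fintype.one_lt_card (α := F)
    exact_mod_cast (by omega : 1 ≤ r)
  have hterm (s : Multiset (NonlinearIrred F)) :
      (k : ℝ) ^ r / r.factorial * (1 - r * (s.card / k)) ≤
        if s.card ≤ k then ((Fintype.card F).multichoose (k - s.card) : ℝ) else 0 := by
    split_ifs with hs
    · rw [hr, succ_multichoose_eq_choose]
      exact pow_div_factorial_mul_le_add_choose hk hs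
    · refine mul_nonpos_of_nonneg_of_nonpos (by positivity) ?_
      have : (1 : ℝ) ≤ s.card / k :=
        (one_le_div (by positivity)).2 (by exact_mod_cast (not_le.1 hs).le)
      nlinarith
  calc _ = ∑ s ∈ excessMultisets F m, (k : ℝ) ^ r / r.factorial * (1 - r * (s.card / k)) := by
        rw [← Finset.mul_sum, Finset.sum_sub_distrib, ← Finset.mul_sum, ← Finset.sum_div]
        simp [mul_div_assoc]
    _ ≤ ∑ s ∈ excessMultisets F m with s.card ≤ k,
          ((Fintype.card F).multichoose (k - s.card) : ℝ) := by
        rw [Finset.sum_filter]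
        exact Finset.sum_le_sum fun s _ ↦ hterm s
    _ = Ncount F (m + k) k := by rw [Ncount_add_eq_sum_multichoose, Nat.cast_sum]

variable {ι : Type*} {l : Filter ι} {m k : ι → ℕ}

theorem tendsto_atTop_of_log_isLittleO (hm : Tendsto m l atTop)
    (hmk : (fun i ↦ Real.log (m i)) =o[l] fun i ↦ (k i : ℝ)) : Tendsto k l atTop := by
  have hone : (fun _ ↦ (1 : ℝ)) =o[l] fun i ↦ Real.log (m i) :=
    isLittleO_one_left_iff ℝ |>.2 <| tendsto_norm_atTop_atTop.comp <|
      Real.tendsto_log_atTop.comp <| tendsto_natCast_atTop_atTop.comp hm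
  refine (tendsto_natCast_atTop_iff (R := ℝ)).1 ?_
  simpa using (isLittleO_one_left_iff ℝ).1 (hone.trans hmk)

theorem Ncount_add_isEquivalent_card_mul (hr : Fintype.card F = r + 1) (hm : Tendsto m l atTop)
    (hmk : (fun i ↦ Real.log (m i)) =o[l] fun i ↦ (k i : ℝ)) :
    (fun i ↦ (Ncount F (m i + k i) (k i) : ℝ)) ~[l]
      fun i ↦ (k i : ℝ) ^ r / r.factorial * (excessMultisets F (m i)).card := by
  have hk := tendsto_atTop_of_log_isLittleO hm hmk
  have hT : ∀ᶠ i in l, ((excessMultisets F (m i)).card : ℝ) ≠ 0 :=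
    (hm.eventually (card_pow_isBigO_card_excessMultisets F).eq_zero_imp).mono fun i hi hi₀ ↦
      pow_ne_zero _ (Nat.cast_ne_zero.2 Fintype.card_ne_zero) (hi hi₀)
  have hlower := (((sum_card_excessMultisets_isBigO F).comp_tendsto hm).trans_isLittleO
    (hmk.mul_isBigO (isBigO_refl (fun i ↦ ((excessMultisets F (m i)).card : ℝ)) l))
      ).tendsto_div_nhds_zero.const_mul (r : ℝ) |>.const_sub 1
  have hk₀ : ∀ᶠ i in l, (k i : ℝ) ^ r / r.factorial ≠ 0 :=
    (hk.eventually_ne_atTop 0).mono fun i hi ↦ by positivity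
  have hupper := (isEquivalent_iff_tendsto_one hk₀).1
    ((isEquivalent_add_choose r).comp_tendsto hk)
  rw [mul_zero, sub_zero] at hlower
  refine isEquivalent_of_tendsto_one
    (tendsto_of_tendsto_of_tendsto_of_le_of_le' hlower hupper ?_ ?_)
  · filter_upwards [hk.eventually_ne_atTop 0, hT] with i hki hTi
    simp only [Function.comp_apply, Pi.div_apply]
    rw [le_div_iff₀ (by positivity)]
    refine Eq.trans_le ?_ (le_Ncount_add hr (m i) hki)
    field_simp
  · filter_upwards [hk.eventually_ne_atTop 0, hT] with i hki hTi
    simp only [Function.comp_apply, Pi.div_apply]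
    rw [div_le_iff₀ (by positivity), ← mul_assoc, div_mul_cancel₀ _ (by positivity)]
    exact_mod_cast Ncount_add_le hr (m i) (k i)

theorem Ncount_add_isEquivalent (hm : Tendsto m l atTop)
    (hmk : (fun i ↦ Real.log (m i)) =o[l] fun i ↦ (k i : ℝ)) :
    (fun i ↦ (Ncount F (m i + k i) (k i) : ℝ)) ~[l] fun i ↦
      Cconst (Fintype.card F) F * (Fintype.card F : ℝ) ^ m i *
        (k i : ℝ) ^ (Fintype.card F - 1) * (m i : ℝ) ^ (Fintype.card F - 1) := by
  obtain ⟨r, hr⟩ := Nat.exists_eq_add_one_of_ne_zero (Fintype.card_ne_zero (α := F))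
  refine ((Ncount_add_isEquivalent_card_mul hr hm hmk).trans (IsEquivalent.refl.mul
    ((card_excessMultisets_isEquivalent F hr).comp_tendsto hm))).congr_right ?_
  refine Eventually.of_forall fun i ↦ ?_
  simp only [Pi.mul_apply, Function.comp_apply]
  rw [Cconst_eq_comparisonValue F hr, hr, Nat.add_sub_cancel]
  ring

end Asymptotics

section Uniformity

variable (F : Type*) [Field F] [Fintype F]

theorem Cconst_pos : 0 < Cconst (Fintype.card F) F := by
  obtain ⟨r, hr⟩ := Nat.exists_eq_add_one_of_ne_zero (Fintype.card_ne_zero (α := F))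
  rw [Cconst_eq_comparisonValue F hr]
  exact mul_pos (by positivity) (comparisonValue_pos F)

variable {ι : Type*} {l : Filter ι} {m n k : ι → ℕ} {ξ η : ℕ → ℝ}

theorem tendsto_Ncount_add_div (hm : Tendsto m l atTop)
    (hmk : (fun i ↦ Real.log (m i)) =o[l] fun i ↦ (k i : ℝ)) :
    Tendsto (fun i ↦ (Ncount F (m i + k i) (k i) : ℝ) /
      (Cconst (Fintype.card F) F * (Fintype.card F : ℝ) ^ m i *
        (k i : ℝ) ^ (Fintype.card F - 1) * (m i : ℝ) ^ (Fintype.card F - 1))) l (𝓝 1) := by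
  refine (isEquivalent_iff_tendsto_one ?_).1 (Ncount_add_isEquivalent hm hmk)
  filter_upwards [hm.eventually_ne_atTop 0,
    (tendsto_atTop_of_log_isLittleO hm hmk).eventually_ne_atTop 0] with i hmi hki
  have := Cconst_pos F
  positivity

theorem tendsto_sub_atTop_of_le_sub (hη : Tendsto η atTop atTop) (hn : Tendsto n l atTop)
    (hkn : ∀ᶠ i in l, (k i : ℝ) ≤ n i - η (n i)) : Tendsto (fun i ↦ n i - k i) l atTop := by
  refine tendsto_natCast_atTop_iff.1 (tendsto_atTop_mono' l ?_ (hη.comp hn))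
  filter_upwards [hkn] with i hi
  have : (n i : ℝ) ≤ (n i - k i : ℕ) + k i := by exact_mod_cast le_tsub_add
  rw [Function.comp_apply]
  linarith

theorem log_sub_isLittleO_of_mul_log_le (hξ : Tendsto ξ atTop atTop) (hn : Tendsto n l atTop)
    (hnk : Tendsto (fun i ↦ n i - k i) l atTop)
    (hk : ∀ᶠ i in l, ξ (n i) * Real.log (n i) ≤ k i) :
    (fun i ↦ Real.log (n i - k i : ℕ)) =o[l] fun i ↦ (k i : ℝ) := by
  refine isLittleO_iff.2 fun c hc ↦ ?_
  filter_upwards [(hξ.comp hn).eventually_ge_atTop c⁻¹, hnk.eventually_ge_atTop 1, hk]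
    with i hξi hnki hki
  have hpos : (0 : ℝ) < (n i - k i : ℕ) := by positivity
  rw [Real.norm_of_nonneg (Real.log_natCast_nonneg _), Real.norm_of_nonneg (Nat.cast_nonneg _)]
  calc Real.log (n i - k i : ℕ) ≤ Real.log (n i) :=
        Real.log_le_log hpos (Nat.cast_le.2 (Nat.sub_le _ _))
    _ = c * (c⁻¹ * Real.log (n i)) := (mul_inv_cancel_left₀ hc.ne' _).symm
    _ ≤ c * (ξ (n i) * Real.log (n i)) :=
        mul_le_mul_of_nonneg_left (mul_le_mul_of_nonneg_right hξi (Real.log_natCast_nonneg _)) hc.le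
    _ ≤ c * k i := mul_le_mul_of_nonneg_left hki hc.le

theorem stmt0_general (hξ : Tendsto ξ atTop atTop) (hη : Tendsto η atTop atTop) {ε : ℝ}
    (hε : 0 < ε) :
    ∃ N₀ : ℕ, ∀ n : ℕ, N₀ ≤ n → ∀ k : ℕ, ξ n * Real.log n ≤ k → (k : ℝ) ≤ n - η n →
      |(Ncount F n k : ℝ) / (Cconst (Fintype.card F) F * (Fintype.card F : ℝ) ^ (n - k) *
        (k : ℝ) ^ (Fintype.card F - 1) * ((n - k : ℕ) : ℝ) ^ (Fintype.card F - 1)) - 1| ≤ ε := by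
  let l : Filter (ℕ × ℕ) := comap Prod.fst atTop ⊓
    𝓟 {i | ξ i.1 * Real.log i.1 ≤ i.2 ∧ (i.2 : ℝ) ≤ i.1 - η i.1}
  have hn : Tendsto Prod.fst l atTop := tendsto_comap.mono_left inf_le_left
  have hrange : ∀ᶠ i in l, ξ i.1 * Real.log i.1 ≤ i.2 ∧ (i.2 : ℝ) ≤ i.1 - η i.1 :=
    mem_inf_of_right (mem_principal_self _)
  have hnk := tendsto_sub_atTop_of_le_sub hη hn (hrange.mono fun _ ↦ And.right)
  have hlim := tendsto_Ncount_add_div F hnk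
    (log_sub_isLittleO_of_mul_log_le hξ hn hnk (hrange.mono fun _ ↦ And.left))
  have hclose := (hlim.eventually (Metric.closedBall_mem_nhds 1 hε)).and
    (hnk.eventually_ne_atTop 0)
  rw [eventually_inf_principal, eventually_comap, eventually_atTop] at hclose
  obtain ⟨N₀, hN₀⟩ := hclose
  refine ⟨N₀, fun n hn k hξk hkη ↦ ?_⟩
  obtain ⟨hdist, hne⟩ := hN₀ n hn (n, k) rfl ⟨hξk, hkη⟩
  rwa [Nat.sub_add_cancel (Nat.le_of_not_le fun h ↦ hne (Nat.sub_eq_zero_of_le h)),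
    Real.dist_eq] at hdist

end Uniformity

theorem stmt0 (q : ℕ) (hq : IsPrimePow q) (hq2 : 2 < q)
    (F : Type*) [Field F] [Fintype F] (hF : Fintype.card F = q)
    (B : ℝ) (hB : 2 ≤ B) (ξ : ℕ → ℝ) (hξ : Filter.Tendsto ξ Filter.atTop Filter.atTop)
    (ε : ℝ) (hε : 0 < ε) :
    ∃ N₀ : ℕ, ∀ n : ℕ, N₀ ≤ n → ∀ k : ℕ,
      ξ n * Real.log n ≤ (k : ℝ) → (k : ℝ) ≤ (n : ℝ) / B →
      |(Ncount F n k : ℝ) /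
          (Cconst q F * (q : ℝ) ^ (n - k) * (k : ℝ) ^ (q - 1) * ((n - k : ℕ) : ℝ) ^ (q - 1))
        - 1| ≤ ε := by
  subst hF
  refine (stmt0_general F hξ (η := fun n ↦ n / 2)
    (tendsto_natCast_atTop_atTop.atTop_div_const two_pos) hε).imp fun N₀ h n hn k hξk hkB ↦
      h n hn k hξk (hkB.trans ?_)
  linarith [div_le_div_of_nonneg_left n.cast_nonneg two_pos hB]
end

section
/- There is an absolute constant C such that for every integer n ≥ 2 and every real r > 0, the circle integral ∫_{|z|=r} |n^{z−r}| |dz| = r · ∫_0^{2π} n^{r(cos θ − 1)} dθ satisfies ∫_{|z|=r} |n^{z−r}| |dz| ≤ C · r/√(r·log n). -/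
/-!
On a period centred at `0` we have `cos θ - 1 ≤ -(2 / π ^ 2) * θ ^ 2`, so that
`exp (L * (cos θ - 1))` with `L = r * log n` is dominated by a Gaussian whose integral over the
whole line is of order `1 / √L`.
-/

open MeasureTheory

lemma intervalIntegral_gaussian_le {b u v : ℝ} (hb : 0 < b) (huv : u ≤ v) :
    ∫ x in u..v, Real.exp (-b * x ^ 2) ≤ √(Real.pi / b) := by
  rw [intervalIntegral.integral_of_le huv, ← integral_gaussian b]
  exact setIntegral_le_integral (integrable_exp_neg_mul_sq hb)
    (Filter.Eventually.of_forall fun x => (Real.exp_pos _).le)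

lemma exp_mul_cos_sub_one_le_gaussian {L θ : ℝ} (hL : 0 ≤ L) (hθ : |θ| ≤ Real.pi) :
    Real.exp (L * (Real.cos θ - 1)) ≤ Real.exp (-(L * (2 / Real.pi ^ 2)) * θ ^ 2) := by
  have hcos : Real.cos θ - 1 ≤ -(2 / Real.pi ^ 2 * θ ^ 2) := by
    linarith [Real.cos_le_one_sub_mul_cos_sq hθ]
  refine Real.exp_le_exp.2 ?_
  calc L * (Real.cos θ - 1) ≤ L * -(2 / Real.pi ^ 2 * θ ^ 2) :=
        mul_le_mul_of_nonneg_left hcos hL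
    _ = -(L * (2 / Real.pi ^ 2)) * θ ^ 2 := by ring

lemma integral_exp_mul_cos_sub_one_period_eq (L t : ℝ) :
    ∫ θ in t..t + 2 * Real.pi, Real.exp (L * (Real.cos θ - 1)) =
      ∫ θ in -Real.pi..Real.pi, Real.exp (L * (Real.cos θ - 1)) := by
  have hper : Function.Periodic (fun θ => Real.exp (L * (Real.cos θ - 1))) (2 * Real.pi) :=
    Real.cos_periodic.comp fun c => Real.exp (L * (c - 1))
  rw [hper.intervalIntegral_add_eq t (-Real.pi), show -Real.pi + 2 * Real.pi = Real.pi by ring]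

lemma integral_exp_mul_cos_sub_one_le {L : ℝ} (hL : 0 < L) (t : ℝ) :
    ∫ θ in t..t + 2 * Real.pi, Real.exp (L * (Real.cos θ - 1)) ≤ √(Real.pi ^ 3 / 2) / √L := by
  have hpi : -Real.pi ≤ Real.pi := neg_le_self Real.pi_pos.le
  calc ∫ θ in t..t + 2 * Real.pi, Real.exp (L * (Real.cos θ - 1))
      = ∫ θ in -Real.pi..Real.pi, Real.exp (L * (Real.cos θ - 1)) :=
        integral_exp_mul_cos_sub_one_period_eq L t
    _ ≤ ∫ θ in -Real.pi..Real.pi, Real.exp (-(L * (2 / Real.pi ^ 2)) * θ ^ 2) :=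
        intervalIntegral.integral_mono_on hpi
          (Continuous.intervalIntegrable (by fun_prop) _ _)
          (Continuous.intervalIntegrable (by fun_prop) _ _)
          fun θ hθ => exp_mul_cos_sub_one_le_gaussian hL.le (abs_le.2 hθ)
    _ ≤ √(Real.pi / (L * (2 / Real.pi ^ 2))) := intervalIntegral_gaussian_le (by positivity) hpi
    _ = √(Real.pi ^ 3 / 2 / L) := by congr 1; field_simp
    _ = √(Real.pi ^ 3 / 2) / √L := Real.sqrt_div (by positivity) L

theorem stmt17_general :
    ∃ C : ℝ, ∀ a : ℝ, 1 < a → ∀ r : ℝ, 0 < r →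
      r * ∫ θ in (0 : ℝ)..(2 * Real.pi), a ^ (r * (Real.cos θ - 1)) ≤
        C * r / √(r * Real.log a) := by
  refine ⟨√(Real.pi ^ 3 / 2), fun a ha r hr => ?_⟩
  have hL : 0 < r * Real.log a := mul_pos hr (Real.log_pos ha)
  have hexp (θ : ℝ) : a ^ (r * (Real.cos θ - 1)) =
      Real.exp (r * Real.log a * (Real.cos θ - 1)) := by
    rw [Real.rpow_def_of_pos (zero_lt_one.trans ha)]
    ring_nf
  have hbound := integral_exp_mul_cos_sub_one_le hL 0
  rw [zero_add] at hbound
  simp only [hexp]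
  calc r * ∫ θ in (0 : ℝ)..(2 * Real.pi), Real.exp (r * Real.log a * (Real.cos θ - 1))
      ≤ r * (√(Real.pi ^ 3 / 2) / √(r * Real.log a)) := mul_le_mul_of_nonneg_left hbound hr.le
    _ = √(Real.pi ^ 3 / 2) * r / √(r * Real.log a) := by ring

theorem stmt17 :
    ∃ C : ℝ, ∀ n : ℕ, 2 ≤ n → ∀ r : ℝ, 0 < r →
      r * ∫ θ in (0 : ℝ)..(2 * Real.pi), (n : ℝ) ^ (r * (Real.cos θ - 1)) ≤
        C * r / Real.sqrt (r * Real.log n) := by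
  obtain ⟨C, hC⟩ := stmt17_general
  exact ⟨C, fun n hn => hC n (Nat.one_lt_cast.2 hn)⟩
end
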